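/- For every real number d that is irrational and algebraic over ℚ, every compact set K contained in the open strip D := {s ∈ ℂ : 1/2 < Re(s) < 1} with connected complement in ℂ, and every ε > 0, one has liminf_{T→∞} (1/T)·μ{τ ∈ [0,T] : sup_{s∈K} |ζ(s+idτ) − ζ(s+iτ)| < ε} > 0. -/

import Mathlib

open MeasureTheory Filter Complex
open scoped ENNReal

/-- The open strip `D = {s : 1/2 < Re s < 1}`. -/
def strip : Set ℂ := {s : ℂ | 1/2 < s.re ∧ s.re < 1}

/-- Lower density of a set of real numbers:
`liminf_{T→∞} (1/T)·μ(S ∩ [0,T])`. -/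
noncomputable def lowerDens (S : Set ℝ) : ℝ :=
  liminf (fun T : ℝ => (volume (S ∩ Set.Icc 0 T)).toReal / T) atTop

/-- `sup_{s ∈ K} |f s|`, valued in `ℝ≥0∞`. -/
noncomputable def supNorm (K : Set ℂ) (f : ℂ → ℂ) : ℝ≥0∞ :=
  ⨆ s ∈ K, (‖f s‖₊ : ℝ≥0∞)

/-!
Truncated Dirichlet series approximate `ζ` in mean square on vertical lines of the strip, so it
suffices to compare `n ^ (-i d τ)` with `n ^ (-i τ)`. These are weighted by
`w τ = |∑ q ∈ S, q ^ (i (d - 1) τ)|² / #S`, where `S` is a finite set of positive rationals. If `S`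
is a Følner set of the multiplicative group `ℚ_{>0}`, multiplying the sum by `n ^ (i (d - 1) τ)`
only translates `S`, hence `ζ (s + i d τ) - ζ (s + i τ)` has small mean square for the weight `w`.
No cross terms contribute to these means, because `p ^ (d - 1) = q` has no solution in positive
rationals with `p ≠ 1`; for algebraic irrational `d` this is the Gelfond–Schneider theorem. As `w`
is bounded and has mean `1`, and Cauchy's formula bounds suprema by means over circles, the
difference is uniformly small on `K` for a set of `τ` of positive lower density.

The Gelfond–Schneider theorem is only needed for reals, where Rolle's theorem bounds the number of
zeros of the auxiliary function `∑ ξᵢⱼ zⁱ xʲᶻ`. Siegel's lemma makes it vanish on a square of points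
`a + c b`; by the Schwarz lemma it is then tiny on a square of twice the side, and so zero there
since a nonzero algebraic integer cannot have all its conjugates bounded and one of them tiny.
-/

section Plancherel

open FourierTransform SchwartzMap
open scoped ContDiff

variable {E F : Type*} [NormedAddCommGroup E] [InnerProductSpace ℝ E] [FiniteDimensional ℝ E]
  [MeasurableSpace E] [BorelSpace E] [NormedAddCommGroup F] [InnerProductSpace ℂ F]
  [CompleteSpace F] {f : E → F}

lemma integral_smul_fourier_eq (hf : Integrable f) (g : 𝓢(E, ℂ)) :
    ∫ x, g x • 𝓕 f x = ∫ x, 𝓕 g x • f x := by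
  have h := VectorFourier.integral_fourierIntegral_smul_eq_flip (L := innerₗ E)
      Real.continuous_fourierChar continuous_inner (g.integrable (μ := volume)) hf
  rw [flip_innerₗ] at h
  exact h.symm

lemma ae_fourier_eq_fourier_toLp (hf : Integrable f) (hf₂ : MemLp f 2) :
    𝓕 f =ᵐ[volume] ⇑(𝓕 (hf₂.toLp f) : Lp F 2 (volume : Measure E)) := by
  have hcont : Continuous (𝓕 f) :=
    VectorFourier.fourierIntegral_continuous Real.continuous_fourierChar continuous_inner hf
  refine ae_eq_of_integral_contDiff_smul_eq hcont.locallyIntegrable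
    ((Lp.memLp _).locallyIntegrable one_le_two) fun g hg hgc => ?_
  have hgc' : HasCompactSupport (Complex.ofRealCLM ∘ g) := hgc.comp_left rfl
  have hg' : ContDiff ℝ ∞ (Complex.ofRealCLM ∘ g) := by fun_prop
  let γ : 𝓢(E, ℂ) := hgc'.toSchwartzMap hg'
  calc ∫ x, g x • 𝓕 f x = ∫ x, γ x • 𝓕 f x := by simp [γ]
    _ = ∫ x, 𝓕 γ x • f x := integral_smul_fourier_eq hf γ
    _ = ∫ x, 𝓕 γ x • hf₂.toLp f x :=
      integral_congr_ae (hf₂.coeFn_toLp.mono fun x hx => by simp only [hx])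
    _ = 𝓕 (hf₂.toLp f : 𝓢'(E, F)) γ := by simp
    _ = ∫ x, γ x • 𝓕 (hf₂.toLp f) x := by
      rw [Lp.fourier_toTemperedDistribution_eq, Lp.toTemperedDistribution_apply]
    _ = ∫ x, g x • 𝓕 (hf₂.toLp f) x := by simp [γ]

lemma eLpNorm_fourier_eq (hf : Integrable f) (hf₂ : MemLp f 2) :
    eLpNorm (𝓕 f) 2 = eLpNorm f 2 := by
  rw [eLpNorm_congr_ae (ae_fourier_eq_fourier_toLp hf hf₂), ← Lp.enorm_def,
    ← eLpNorm_congr_ae hf₂.coeFn_toLp, ← Lp.enorm_def, enorm_eq_iff_norm_eq, Lp.norm_fourier_eq]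

lemma memLp_fourier (hf : Integrable f) (hf₂ : MemLp f 2) : MemLp (𝓕 f) 2 :=
  (memLp_congr_ae (ae_fourier_eq_fourier_toLp hf hf₂)).2 (Lp.memLp _)

lemma integral_norm_fourier_sq_eq (hf : Integrable f) (hf₂ : MemLp f 2) :
    ∫ x, ‖𝓕 f x‖ ^ 2 = ∫ x, ‖f x‖ ^ 2 := by
  have h := eLpNorm_fourier_eq hf hf₂
  rw [(memLp_fourier hf hf₂).eLpNorm_eq_integral_rpow_norm two_ne_zero ENNReal.ofNat_ne_top,
    hf₂.eLpNorm_eq_integral_rpow_norm two_ne_zero ENNReal.ofNat_ne_top,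
    ENNReal.ofReal_eq_ofReal_iff (by positivity) (by positivity),
    Real.rpow_left_inj (by positivity) (by positivity) (by simp)] at h
  simpa using h

end Plancherel

section MellinPlancherel

open Real FourierTransform

lemma image_exp_neg_univ : (fun u : ℝ => rexp (-u)) '' Set.univ = Set.Ioi 0 := by
  rw [Set.image_univ]
  exact (neg_surjective.range_comp rexp).trans Real.range_exp

lemma hasDerivAt_exp_neg (u : ℝ) : HasDerivAt (fun u : ℝ => rexp (-u)) (-rexp (-u)) u := by
  simpa using (hasDerivAt_neg u).exp

variable {F : Type*} [NormedAddCommGroup F]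

lemma integrable_comp_exp_neg_iff [NormedSpace ℝ F] (g : ℝ → F) :
    Integrable (fun u => rexp (-u) • g (rexp (-u))) ↔ IntegrableOn g (Set.Ioi 0) := by
  rw [← image_exp_neg_univ, integrableOn_image_iff_integrableOn_abs_deriv_smul MeasurableSet.univ
    (fun u _ => (hasDerivAt_exp_neg u).hasDerivWithinAt)
    (Real.exp_injective.comp neg_injective).injOn]
  simp [integrableOn_univ]

lemma integral_comp_exp_neg [NormedSpace ℝ F] (g : ℝ → F) :
    ∫ u, rexp (-u) • g (rexp (-u)) = ∫ x in Set.Ioi 0, g x := by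
  rw [← image_exp_neg_univ, integral_image_eq_integral_abs_deriv_smul MeasurableSet.univ
    (fun u _ => (hasDerivAt_exp_neg u).hasDerivWithinAt)
    (Real.exp_injective.comp neg_injective).injOn]
  simp

variable [InnerProductSpace ℂ F] {f : ℝ → F} {σ : ℝ}

lemma integrable_exp_smul_comp_exp_neg (hf : MellinConvergent f σ) :
    Integrable fun u => rexp (-σ * u) • f (rexp (-u)) := by
  refine ((integrable_comp_exp_neg_iff _).2 hf).congr (ae_of_all _ fun u => ?_)
  have h : rexp (-σ * u) = rexp (-u) * rexp (-u) ^ (σ - 1) := by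
    rw [← Real.exp_mul, ← Real.exp_add]
    ring_nf
  dsimp only
  rw [h, mul_smul, ← Complex.coe_smul (rexp (-u) ^ (σ - 1)),
    Complex.ofReal_cpow (Real.exp_pos _).le]
  push_cast
  rfl

lemma norm_exp_smul_comp_exp_neg_sq (u : ℝ) :
    ‖rexp (-σ * u) • f (rexp (-u))‖ ^ 2
      = rexp (-u) • (rexp (-u) ^ (2 * σ - 1) * ‖f (rexp (-u))‖ ^ 2) := by
  rw [norm_smul, mul_pow, Real.norm_eq_abs, abs_exp, smul_eq_mul, ← mul_assoc, ← Real.exp_mul,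
    ← Real.exp_add, ← Real.exp_nat_mul]
  ring_nf

lemma memLp_exp_smul_comp_exp_neg (hf : MellinConvergent f σ)
    (hf₂ : IntegrableOn (fun x => x ^ (2 * σ - 1) * ‖f x‖ ^ 2) (Set.Ioi 0)) :
    MemLp (fun u => rexp (-σ * u) • f (rexp (-u))) 2 := by
  rw [memLp_two_iff_integrable_sq_norm (integrable_exp_smul_comp_exp_neg hf).1]
  simpa only [norm_exp_smul_comp_exp_neg_sq] using (integrable_comp_exp_neg_iff _).2 hf₂

lemma mellin_vertical_eq_fourier (f : ℝ → F) (σ t : ℝ) :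
    mellin f (σ + t * I) = 𝓕 (fun u => rexp (-σ * u) • f (rexp (-u))) (t / (2 * π)) := by
  simp [mellin_eq_fourier]

lemma integrable_norm_mellin_sq [CompleteSpace F] (hf : MellinConvergent f σ)
    (hf₂ : IntegrableOn (fun x => x ^ (2 * σ - 1) * ‖f x‖ ^ 2) (Set.Ioi 0)) :
    Integrable fun t : ℝ => ‖mellin f (σ + t * I)‖ ^ 2 := by
  simp only [mellin_vertical_eq_fourier]
  exact ((memLp_fourier (integrable_exp_smul_comp_exp_neg hf)
    (memLp_exp_smul_comp_exp_neg hf hf₂)).integrable_norm_pow two_ne_zero).comp_div (by positivity)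

theorem integral_norm_mellin_sq [CompleteSpace F] (hf : MellinConvergent f σ)
    (hf₂ : IntegrableOn (fun x => x ^ (2 * σ - 1) * ‖f x‖ ^ 2) (Set.Ioi 0)) :
    ∫ t : ℝ, ‖mellin f (σ + t * I)‖ ^ 2
      = 2 * π * ∫ x in Set.Ioi 0, x ^ (2 * σ - 1) * ‖f x‖ ^ 2 := by
  simp only [mellin_vertical_eq_fourier]
  rw [Measure.integral_comp_div (fun ξ => ‖𝓕 (fun u => rexp (-σ * u) • f (rexp (-u))) ξ‖ ^ 2),
    integral_norm_fourier_sq_eq (integrable_exp_smul_comp_exp_neg hf)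
      (memLp_exp_smul_comp_exp_neg hf hf₂), abs_of_pos two_pi_pos, smul_eq_mul]
  simp only [norm_exp_smul_comp_exp_neg_sq]
  rw [integral_comp_exp_neg fun x => x ^ (2 * σ - 1) * ‖f x‖ ^ 2]

end MellinPlancherel

section TruncatedZeta

/-- The Dirichlet polynomial `∑_{n ≤ N} n ^ (-s)` truncating the Dirichlet series of `ζ`. -/
noncomputable def zetaPartialSum (N : ℕ) (s : ℂ) : ℂ := ∑ n ∈ Finset.Icc 1 N, (n : ℂ) ^ (-s)

lemma differentiable_zetaPartialSum (N : ℕ) : Differentiable ℂ (zetaPartialSum N) := by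
  refine Differentiable.fun_sum fun n hn => Differentiable.const_cpow (by fun_prop) (Or.inl ?_)
  exact_mod_cast Nat.one_le_iff_ne_zero.1 (Finset.mem_Icc.1 hn).1

/-- The fractional part function cut off to `(N, ∞)`; its Mellin transform is the error term in the
approximation of `ζ` by `zetaPartialSum N`. -/
noncomputable def fractTail (N : ℕ) : ℝ → ℂ :=
  (Set.Ioi (N : ℝ)).indicator fun t => ((Int.fract t : ℝ) : ℂ)

lemma fractTail_of_lt {N : ℕ} {t : ℝ} (ht : N < t) : fractTail N t = (Int.fract t : ℝ) :=
  Set.indicator_of_mem (Set.mem_Ioi.2 ht) _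

lemma fractTail_of_le {N : ℕ} {t : ℝ} (ht : t ≤ N) : fractTail N t = 0 :=
  Set.indicator_of_notMem (by simpa using ht) _

lemma norm_fractTail_le_one (N : ℕ) (t : ℝ) : ‖fractTail N t‖ ≤ 1 := by
  refine (norm_indicator_le_norm_self _ t).trans ?_
  rw [Complex.norm_real, Real.norm_of_nonneg (Int.fract_nonneg t)]
  exact (Int.fract_lt_one t).le

lemma measurable_fractTail (N : ℕ) : Measurable (fractTail N) :=
  (Complex.measurable_ofReal.comp measurable_fract).indicator measurableSet_Ioi

lemma locallyIntegrable_fractTail (N : ℕ) : LocallyIntegrable (fractTail N) :=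
  (locallyIntegrable_const (1 : ℝ)).mono (measurable_fractTail N).aestronglyMeasurable
    (Eventually.of_forall fun t => by simpa using norm_fractTail_le_one N t)

lemma fractTail_isBigO_atTop (N : ℕ) : fractTail N =O[atTop] fun x : ℝ => x ^ (-(0 : ℝ)) :=
  Asymptotics.isBigO_of_le _ fun t => by simpa using norm_fractTail_le_one N t

variable {N : ℕ} {s : ℂ}

lemma fractTail_isBigO_nhdsGT_zero (hN : 1 ≤ N) (r : ℝ) :
    fractTail N =O[nhdsWithin 0 (Set.Ioi 0)] fun x : ℝ => x ^ (-r) := by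
  refine (Asymptotics.isBigO_zero _ _).congr' ?_ EventuallyEq.rfl
  have hlt : Set.Iio (1 : ℝ) ∈ nhdsWithin 0 (Set.Ioi 0) :=
    mem_nhdsWithin_of_mem_nhds (Iio_mem_nhds one_pos)
  filter_upwards [hlt] with t ht
  exact (fractTail_of_le ((Set.mem_Iio.1 ht).le.trans (by exact_mod_cast hN))).symm

lemma mellinConvergent_fractTail (hN : 1 ≤ N) (hs : s.re < 0) : MellinConvergent (fractTail N) s :=
  mellinConvergent_of_isBigO_rpow ((locallyIntegrable_fractTail N).locallyIntegrableOn _)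
    (fractTail_isBigO_atTop N) hs (fractTail_isBigO_nhdsGT_zero hN (s.re - 1)) (by simp)

lemma differentiableAt_mellin_fractTail (hN : 1 ≤ N) (hs : s.re < 0) :
    DifferentiableAt ℂ (mellin (fractTail N)) s :=
  mellin_differentiableAt_of_isBigO_rpow ((locallyIntegrable_fractTail N).locallyIntegrableOn _)
    (fractTail_isBigO_atTop N) hs (fractTail_isBigO_nhdsGT_zero hN (s.re - 1)) (by simp)

lemma mellin_fractTail (N : ℕ) (s : ℂ) :
    mellin (fractTail N) s = ∫ t in Set.Ioi (N : ℝ), (t : ℂ) ^ (s - 1) * fractTail N t :=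
  setIntegral_eq_of_subset_of_forall_sdiff_eq_zero measurableSet_Ioi
    (Set.Ioi_subset_Ioi N.cast_nonneg)
    fun t ht => by simp [fractTail_of_le (not_lt.1 ht.2)]

/-- The coefficients of the Dirichlet series `∑_{n > N} n ^ (-s)`. -/
def tailCoeff (N n : ℕ) : ℂ := if N < n then 1 else 0

lemma sum_tailCoeff (N n : ℕ) : ∑ k ∈ Finset.Icc 1 n, tailCoeff N k = ((n - N : ℕ) : ℂ) := by
  have h : (Finset.Icc 1 n).filter (N < ·) = Finset.Ioc N n := by
    ext
    simp only [Finset.mem_filter, Finset.mem_Icc, Finset.mem_Ioc]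
    omega
  simp [tailCoeff, Finset.sum_boole, h]

lemma sum_norm_tailCoeff_isBigO (N : ℕ) :
    (fun n => ∑ k ∈ Finset.Icc 1 n, ‖tailCoeff N k‖) =O[atTop] fun n => (n : ℝ) ^ (1 : ℝ) := by
  refine Asymptotics.isBigO_of_le _ fun n => ?_
  rw [Real.rpow_one, Real.norm_of_nonneg (by positivity), Real.norm_of_nonneg (by positivity)]
  calc ∑ k ∈ Finset.Icc 1 n, ‖tailCoeff N k‖ ≤ ∑ _k ∈ Finset.Icc 1 n, (1 : ℝ) :=
        Finset.sum_le_sum fun _ _ => by unfold tailCoeff; split_ifs <;> simp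
    _ = n := by simp

lemma riemannZeta_eq_zetaPartialSum_add_LSeries (N : ℕ) (hs : 1 < s.re) :
    riemannZeta s = zetaPartialSum N s + LSeries (tailCoeff N) s := by
  have hsum : LSeriesSummable 1 s := LSeriesSummable_one_iff.2 hs
  rw [← LSeries_one_eq_riemannZeta hs, LSeries, ← hsum.sum_add_tsum_compl (s := Finset.Icc 1 N),
    tsum_subtype]
  congr 1
  · refine Finset.sum_congr rfl fun n hn => ?_
    rw [LSeries.term_of_ne_zero (Nat.one_le_iff_ne_zero.1 (Finset.mem_Icc.1 hn).1), cpow_neg,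
      Pi.one_apply, one_div]
  · refine tsum_congr fun n => ?_
    rcases eq_or_ne n 0 with rfl | hn
    · simp
    · by_cases hNn : N < n <;>
        simp [Set.indicator, tailCoeff, hNn, Nat.one_le_iff_ne_zero, hn]

lemma sum_tailCoeff_floor_mul_cpow {t : ℝ} (ht : N < t) (s : ℂ) :
    (∑ k ∈ Finset.Icc 1 ⌊t⌋₊, tailCoeff N k) * (t : ℂ) ^ (-(s + 1))
      = (t : ℂ) ^ (-s) - N * (t : ℂ) ^ (-(s + 1)) - (t : ℂ) ^ (-s - 1) * fractTail N t := by
  have ht0 : 0 < t := N.cast_nonneg.trans_lt ht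
  have hfloor : ((⌊t⌋₊ : ℕ) : ℂ) = t - (Int.fract t : ℝ) := by
    rw [← Complex.ofReal_natCast, ← Complex.ofReal_sub, natCast_floor_eq_intCast_floor ht0.le,
      Int.self_sub_fract]
  have hpow : (t : ℂ) ^ (-s) = t * (t : ℂ) ^ (-(s + 1)) := by
    rw [show -s = 1 + -(s + 1) by ring, cpow_add _ _ (by exact_mod_cast ht0.ne'), cpow_one]
  rw [sum_tailCoeff, Nat.cast_sub (Nat.le_floor ht.le), fractTail_of_lt ht, hfloor, hpow,
    show -s - 1 = -(s + 1) by ring]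
  ring

lemma LSeries_tailCoeff (hN : 1 ≤ N) (hs : 1 < s.re) :
    LSeries (tailCoeff N) s = N ^ (1 - s) / (s - 1) - s * mellin (fractTail N) (-s) := by
  have hN0 : (0 : ℝ) < N := by exact_mod_cast hN
  have hNC : (N : ℂ) ≠ 0 := by exact_mod_cast hN0.ne'
  have hs0 : s ≠ 0 := by rintro rfl; norm_num at hs
  have hs1 : s - 1 ≠ 0 := by
    rw [sub_ne_zero]
    rintro rfl
    simp at hs
  have hs1' : 1 - s ≠ 0 := by rwa [← neg_sub, neg_ne_zero]
  have hpow : (N : ℂ) ^ (-s) = N ^ (1 - s) / N := by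
    rw [show -s = (1 - s) - 1 by ring, cpow_sub _ _ hNC, cpow_one]
  have hint₁ : IntegrableOn (fun t : ℝ => (t : ℂ) ^ (-s)) (Set.Ioi (N : ℝ)) :=
    integrableOn_Ioi_cpow_of_lt (by simpa using hs) hN0
  have hint₂ : IntegrableOn (fun t : ℝ => (N : ℂ) * (t : ℂ) ^ (-(s + 1))) (Set.Ioi (N : ℝ)) :=
    (integrableOn_Ioi_cpow_of_lt (by simp; linarith) hN0).const_mul _
  have hint₃ : IntegrableOn (fun t : ℝ => (t : ℂ) ^ (-s - 1) * fractTail N t)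
      (Set.Ioi (N : ℝ)) :=
    IntegrableOn.mono_set (mellinConvergent_fractTail hN (s := -s) (by simp; linarith))
      (Set.Ioi_subset_Ioi hN0.le)
  rw [LSeries_eq_mul_integral' _ zero_le_one hs (sum_norm_tailCoeff_isBigO N),
    setIntegral_eq_of_subset_of_forall_sdiff_eq_zero (s := Set.Ioi (N : ℝ)) measurableSet_Ioi
      (Set.Ioi_subset_Ioi (by exact_mod_cast hN)) fun t ht => by
        simp [sum_tailCoeff, Nat.sub_eq_zero_of_le (Nat.floor_le_of_le (Set.notMem_Ioi.1 ht.2))],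
    setIntegral_congr_fun measurableSet_Ioi fun t ht => sum_tailCoeff_floor_mul_cpow ht s,
    integral_sub (by exact hint₁.sub hint₂) hint₃, integral_sub hint₁ hint₂, integral_const_mul,
    integral_Ioi_cpow_of_lt (by simpa using hs) hN0,
    integral_Ioi_cpow_of_lt (by simp; linarith) hN0, ← mellin_fractTail,
    show -(s + 1) + 1 = -s by ring, ofReal_natCast, hpow, show -s + 1 = 1 - s by ring]
  field_simp
  ring

lemma riemannZeta₁_eq_zetaPartialSum (hN : 1 ≤ N) :
    Set.EqOn riemannZeta₁ (fun s => (s - 1) * zetaPartialSum N s + N ^ (1 - s)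
      - (s - 1) * (s * mellin (fractTail N) (-s))) {s | 0 < s.re} := by
  have hNC : (N : ℂ) ≠ 0 := by exact_mod_cast Nat.one_le_iff_ne_zero.1 hN
  have hopen (r : ℝ) : IsOpen {s : ℂ | r < s.re} := isOpen_lt continuous_const continuous_re
  have hdiff : DifferentiableOn ℂ (fun s => (s - 1) * zetaPartialSum N s + (N : ℂ) ^ (1 - s)
      - (s - 1) * (s * mellin (fractTail N) (-s))) {s | 0 < s.re} := by
    intro z hz
    have hmellin : DifferentiableAt ℂ (fun s => mellin (fractTail N) (-s)) z :=
      (differentiableAt_mellin_fractTail hN (by simpa using hz)).comp z differentiableAt_id.neg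
    have hpow : DifferentiableAt ℂ (fun s : ℂ => (N : ℂ) ^ (1 - s)) z :=
      DifferentiableAt.const_cpow (by fun_prop) (Or.inl hNC)
    have hsum := (differentiable_zetaPartialSum N).differentiableAt (x := z)
    exact DifferentiableAt.differentiableWithinAt (by fun_prop)
  refine AnalyticOnNhd.eqOn_of_preconnected_of_eventuallyEq (z₀ := 2)
    (differentiable_riemannZeta₁.differentiableOn.analyticOnNhd (hopen 0))
    (hdiff.analyticOnNhd (hopen 0)) (convex_halfSpace_re_gt 0).isPreconnected (by simp) ?_
  filter_upwards [(hopen 1).mem_nhds (by simp)] with z hz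
  have hz1 : z ≠ 1 := by
    rintro rfl
    simp at hz
  have hz1' : z - 1 ≠ 0 := sub_ne_zero.2 hz1
  calc riemannZeta₁ z = (z - 1) * riemannZeta z := by
        rw [riemannZeta_eq_inv_sub_mul hz1, mul_inv_cancel_left₀ hz1']
    _ = _ := by
        rw [riemannZeta_eq_zetaPartialSum_add_LSeries N hz, LSeries_tailCoeff hN hz]
        field_simp
        ring

theorem riemannZeta_eq_zetaPartialSum_add (hN : 1 ≤ N) (hs : 0 < s.re) (hs1 : s ≠ 1) :
    riemannZeta s =
      zetaPartialSum N s + (N ^ (1 - s) / (s - 1) - s * mellin (fractTail N) (-s)) := by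
  have hs1' : s - 1 ≠ 0 := sub_ne_zero.2 hs1
  rw [riemannZeta_eq_inv_sub_mul hs1, riemannZeta₁_eq_zetaPartialSum hN hs]
  field_simp
  ring

end TruncatedZeta

section TrigSum

open scoped ComplexConjugate

variable {ι : Type*} (s : Finset ι) (c : ι → ℂ) (l : ι → ℝ)

/-- The generalized trigonometric polynomial with frequencies `l` and coefficients `c`. Dirichlet
polynomials on a vertical line are the case `l n = -log n`. -/
noncomputable def trigSum (t : ℝ) : ℂ := ∑ j ∈ s, c j * cexp ((l j * t : ℝ) * I)

@[fun_prop]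
lemma continuous_trigSum : Continuous (trigSum s c l) := by
  unfold trigSum
  fun_prop

lemma ofReal_norm_trigSum_sq (t : ℝ) : ((‖trigSum s c l t‖ ^ 2 : ℝ) : ℂ) =
    ∑ j ∈ s, ∑ k ∈ s, c j * conj (c k) * cexp (I * (l j - l k : ℝ) * t) := by
  rw [← Complex.normSq_eq_norm_sq, ← Complex.mul_conj, trigSum, map_sum, Finset.sum_mul_sum]
  refine Finset.sum_congr rfl fun j _ => Finset.sum_congr rfl fun k _ => ?_
  simp only [map_mul, ← Complex.exp_conj, conj_I, conj_ofReal]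
  rw [mul_mul_mul_comm, ← Complex.exp_add]
  congr 2
  push_cast
  ring

variable {b : ℝ}

lemma integrable_cexp_mul_gaussian (hb : 0 < b) (x : ℝ) :
    Integrable fun t : ℝ => cexp (I * x * t) * cexp (-(b : ℂ) * t ^ 2) := by
  refine (integrable_cexp_neg_mul_sq (by simpa using hb)).bdd_mul (c := 1)
    (Continuous.aestronglyMeasurable (by fun_prop)) (Eventually.of_forall fun t => ?_)
  rw [show I * (x : ℂ) * t = ((x * t : ℝ) : ℂ) * I by push_cast; ring, norm_exp_ofReal_mul_I]

lemma norm_integral_cexp_mul_gaussian (hb : 0 < b) (x : ℝ) :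
    ‖∫ t : ℝ, cexp (I * x * t) * cexp (-(b : ℂ) * t ^ 2)‖ =
      √(Real.pi / b) * Real.exp (-x ^ 2 / (4 * b)) := by
  rw [fourierIntegral_gaussian (by simpa using hb), norm_mul, ← ofReal_div,
    norm_cpow_eq_rpow_re_of_pos (by positivity), show (1 / 2 : ℂ).re = 1 / 2 by norm_num,
    ← Real.sqrt_eq_rpow, show -(x : ℂ) ^ 2 / (4 * (b : ℂ)) = ((-x ^ 2 / (4 * b) : ℝ) : ℂ) by
      push_cast; ring, norm_exp, ofReal_re]

lemma ofReal_norm_trigSum_sq_mul_gaussian (t : ℝ) :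
    ((‖trigSum s c l t‖ ^ 2 * Real.exp (-b * t ^ 2) : ℝ) : ℂ) =
      ∑ j ∈ s, ∑ k ∈ s, c j * conj (c k) *
        (cexp (I * (l j - l k : ℝ) * t) * cexp (-(b : ℂ) * t ^ 2)) := by
  rw [ofReal_mul, ofReal_norm_trigSum_sq]
  push_cast
  simp only [Finset.sum_mul, mul_assoc]

lemma integrable_norm_trigSum_sq_mul_gaussian (hb : 0 < b) :
    Integrable fun t => ‖trigSum s c l t‖ ^ 2 * Real.exp (-b * t ^ 2) := by
  have h : Integrable fun t => ((‖trigSum s c l t‖ ^ 2 * Real.exp (-b * t ^ 2) : ℝ) : ℂ) := by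
    simp only [ofReal_norm_trigSum_sq_mul_gaussian]
    exact integrable_finsetSum _ fun j _ => integrable_finsetSum _ fun k _ =>
      (integrable_cexp_mul_gaussian hb _).const_mul _
  exact h.re.congr (ae_of_all _ fun t => ofReal_re _)

lemma integral_norm_trigSum_sq_mul_gaussian_le (hb : 0 < b) :
    ∫ t, ‖trigSum s c l t‖ ^ 2 * Real.exp (-b * t ^ 2) ≤
      √(Real.pi / b) * ∑ j ∈ s, ∑ k ∈ s, ‖c j‖ * ‖c k‖ *
        Real.exp (-(l j - l k) ^ 2 / (4 * b)) := by
  have hint (j k : ι) := (integrable_cexp_mul_gaussian hb (l j - l k)).const_mul (c j * conj (c k))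
  have heq : ((∫ t, ‖trigSum s c l t‖ ^ 2 * Real.exp (-b * t ^ 2) : ℝ) : ℂ) =
      ∑ j ∈ s, ∑ k ∈ s, c j * conj (c k) *
        ∫ t : ℝ, cexp (I * (l j - l k : ℝ) * t) * cexp (-(b : ℂ) * t ^ 2) := by
    rw [← integral_complex_ofReal]
    simp only [ofReal_norm_trigSum_sq_mul_gaussian]
    rw [integral_finsetSum _ fun j _ => integrable_finsetSum _ fun k _ => hint j k]
    refine Finset.sum_congr rfl fun j _ => ?_
    rw [integral_finsetSum _ fun k _ => hint j k]
    exact Finset.sum_congr rfl fun k _ => integral_const_mul _ _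
  refine (le_abs_self _).trans ?_
  rw [← Real.norm_eq_abs, ← norm_real, heq, Finset.mul_sum]
  refine (norm_sum_le _ _).trans (Finset.sum_le_sum fun j _ => ?_)
  rw [Finset.mul_sum]
  refine (norm_sum_le _ _).trans (Finset.sum_le_sum fun k _ => ?_)
  rw [norm_mul, norm_mul, RCLike.norm_conj, norm_integral_cexp_mul_gaussian hb, mul_left_comm]

lemma integral_norm_trigSum_sq_le_gaussian {T : ℝ} (hT : 0 < T) :
    ∫ t in -T..T, ‖trigSum s c l t‖ ^ 2 ≤
      Real.exp 1 * ∫ t, ‖trigSum s c l t‖ ^ 2 * Real.exp (-(T ^ 2)⁻¹ * t ^ 2) := by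
  have hTT : -T ≤ T := by linarith
  calc ∫ t in -T..T, ‖trigSum s c l t‖ ^ 2
      ≤ ∫ t in -T..T,
          Real.exp 1 * (‖trigSum s c l t‖ ^ 2 * Real.exp (-(T ^ 2)⁻¹ * t ^ 2)) := by
        refine intervalIntegral.integral_mono_on hTT
          (Continuous.intervalIntegrable (by fun_prop) _ _)
          (Continuous.intervalIntegrable (by fun_prop) _ _) fun t ht => ?_
        have h : (T ^ 2)⁻¹ * t ^ 2 ≤ 1 := by
          rw [inv_mul_le_one₀ (by positivity)]
          exact sq_le_sq' ht.1 ht.2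
        rw [mul_left_comm, ← Real.exp_add]
        exact le_mul_of_one_le_right (by positivity) (Real.one_le_exp (by linarith))
    _ ≤ _ := by
        rw [intervalIntegral.integral_const_mul, intervalIntegral.integral_of_le hTT]
        exact mul_le_mul_of_nonneg_left (setIntegral_le_integral
          (integrable_norm_trigSum_sq_mul_gaussian s c l (by positivity))
          (Eventually.of_forall fun t => by positivity)) (Real.exp_pos _).le

end TrigSum

section DirichletPolynomial

lemma sum_sum_mul_mul_le_of_sum_le {ι : Type*} (s : Finset ι) (x : ι → ℝ) {E : ι → ι → ℝ} {C : ℝ}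
    (hE : ∀ j k, 0 ≤ E j k) (hsymm : ∀ j k, E j k = E k j) (hC : ∀ j ∈ s, ∑ k ∈ s, E j k ≤ C) :
    ∑ j ∈ s, ∑ k ∈ s, x j * x k * E j k ≤ C * ∑ j ∈ s, x j ^ 2 := by
  calc ∑ j ∈ s, ∑ k ∈ s, x j * x k * E j k
      ≤ ∑ j ∈ s, ∑ k ∈ s, (x j ^ 2 * E j k / 2 + x k ^ 2 * E k j / 2) := by
        gcongr with j _ k _
        rw [hsymm k j]
        nlinarith [mul_nonneg (hE j k) (sq_nonneg (x j - x k))]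
    _ = ∑ j ∈ s, x j ^ 2 * ∑ k ∈ s, E j k := by
        simp only [Finset.sum_add_distrib]
        rw [Finset.sum_comm (f := fun j k => x k ^ 2 * E k j / 2), ← Finset.sum_add_distrib]
        simp only [← Finset.sum_add_distrib, add_halves, Finset.mul_sum]
    _ ≤ C * ∑ j ∈ s, x j ^ 2 := by
        rw [Finset.mul_sum]
        refine Finset.sum_le_sum fun j hj => ?_
        rw [mul_comm]
        exact mul_le_mul_of_nonneg_right (hC j hj) (sq_nonneg _)

/-- An upper bound for `∑_{k ∈ ℤ} exp (-k² / 4)`, hence for the row sums of the Gaussian kernel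
`exp (-(m - n)² / 4)` on the integers. -/
noncomputable def gaussianRowBound : ℝ := 2 * ∑' k : ℕ, Real.exp (-(1 / 4)) ^ k

lemma summable_exp_neg_quarter_pow : Summable fun k : ℕ => Real.exp (-(1 / 4)) ^ k :=
  summable_geometric_of_lt_one (Real.exp_pos _).le (Real.exp_lt_one_iff.2 (by norm_num))

lemma gaussianRowBound_pos : 0 < gaussianRowBound :=
  mul_pos two_pos (summable_exp_neg_quarter_pow.tsum_pos (fun k => by positivity) 0 (by simp))

lemma sum_exp_neg_sq_le_of_injOn (s : Finset ℕ) (g : ℕ → ℕ) (hg : Set.InjOn g s) :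
    ∑ n ∈ s, Real.exp (-(g n : ℝ) ^ 2 / 4) ≤ ∑' k : ℕ, Real.exp (-(1 / 4)) ^ k :=
  calc ∑ n ∈ s, Real.exp (-(g n : ℝ) ^ 2 / 4)
      ≤ ∑ n ∈ s, Real.exp (-(1 / 4)) ^ g n := by
        gcongr with n _
        rw [← Real.exp_nat_mul]
        have : (g n : ℝ) ≤ (g n : ℝ) ^ 2 := by exact_mod_cast Nat.le_self_pow two_ne_zero _
        exact Real.exp_le_exp.2 (by linarith)
    _ = ∑ k ∈ s.image g, Real.exp (-(1 / 4)) ^ k := (Finset.sum_image hg).symm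
    _ ≤ _ := summable_exp_neg_quarter_pow.sum_le_tsum _ fun _ _ => by positivity

lemma sum_exp_neg_sub_sq_le (s : Finset ℕ) (m : ℕ) :
    ∑ n ∈ s, Real.exp (-((m : ℝ) - n) ^ 2 / 4) ≤ gaussianRowBound := by
  rw [gaussianRowBound, two_mul, ← Finset.sum_filter_add_sum_filter_not s (fun n => m ≤ n)]
  refine add_le_add ?_ ?_
  · refine le_of_eq_of_le (Finset.sum_congr rfl fun n hn => ?_)
      (sum_exp_neg_sq_le_of_injOn _ (fun n => n - m) fun x hx y hy h => ?_)
    · rw [Nat.cast_sub (Finset.mem_filter.1 hn).2, ← neg_sub (m : ℝ), neg_sq]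
    · simp only [Finset.coe_filter, Set.mem_ofPred_eq] at hx hy h
      omega
  · refine le_of_eq_of_le (Finset.sum_congr rfl fun n hn => ?_)
      (sum_exp_neg_sq_le_of_injOn _ (fun n => m - n) fun x hx y hy h => ?_)
    · rw [Nat.cast_sub (not_le.1 (Finset.mem_filter.1 hn).2).le]
    · simp only [Finset.coe_filter, Set.mem_ofPred_eq] at hx hy h
      omega

lemma sub_sq_le_sq_mul_log_sub_sq {N m n : ℕ} (hm : m ∈ Finset.Icc 1 N)
    (hn : n ∈ Finset.Icc 1 N) :
    ((m : ℝ) - n) ^ 2 ≤ (N : ℝ) ^ 2 * (Real.log m - Real.log n) ^ 2 := by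
  wlog h : n ≤ m generalizing m n
  · rw [sub_sq_comm (m : ℝ), sub_sq_comm (Real.log m)]
    exact this hn hm (le_of_not_ge h)
  have hn0 : (0 : ℝ) < n := by exact_mod_cast (Finset.mem_Icc.1 hn).1
  have hm0 : (0 : ℝ) < m := by exact_mod_cast (Finset.mem_Icc.1 hm).1
  have hmN : (m : ℝ) ≤ N := by exact_mod_cast (Finset.mem_Icc.1 hm).2
  have hmn : (0 : ℝ) ≤ m - n := sub_nonneg.2 (by exact_mod_cast h)
  have hlog : ((m : ℝ) - n) / m ≤ Real.log m - Real.log n := by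
    have := Real.log_le_sub_one_of_pos (div_pos hn0 hm0)
    rw [Real.log_div hn0.ne' hm0.ne'] at this
    rw [sub_div, div_self hm0.ne']
    linarith
  rw [← mul_pow]
  gcongr
  calc (m : ℝ) - n = m * ((m - n) / m) := by field_simp
    _ ≤ N * (Real.log m - Real.log n) := by gcongr

lemma sum_exp_neg_log_sub_log_sq_le {N m : ℕ} (hm : m ∈ Finset.Icc 1 N) :
    ∑ n ∈ Finset.Icc 1 N, Real.exp (-(-Real.log m - -Real.log n) ^ 2 / (4 * ((N : ℝ) ^ 2)⁻¹)) ≤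
      gaussianRowBound := by
  refine (Finset.sum_le_sum fun n hn => Real.exp_le_exp.2 ?_).trans
    (sum_exp_neg_sub_sq_le (Finset.Icc 1 N) m)
  have h := sub_sq_le_sq_mul_log_sub_sq hm hn
  rw [← div_div, div_inv_eq_mul, neg_sub_neg, sub_sq_comm (Real.log n)]
  linarith

/-- The Dirichlet polynomial `∑_{n ≤ N} c n * n ^ (-i t)`. -/
noncomputable def dirichletPoly (N : ℕ) (c : ℕ → ℂ) (t : ℝ) : ℂ :=
  trigSum (Finset.Icc 1 N) c (fun n => -Real.log n) t

lemma integral_norm_dirichletPoly_sq_le {N : ℕ} (hN : 1 ≤ N) (c : ℕ → ℂ) :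
    ∫ t in (-N : ℝ)..N, ‖dirichletPoly N c t‖ ^ 2 ≤
      Real.exp 1 * √Real.pi * gaussianRowBound * N * ∑ n ∈ Finset.Icc 1 N, ‖c n‖ ^ 2 := by
  have hN0 : (0 : ℝ) < N := by exact_mod_cast hN
  calc ∫ t in (-N : ℝ)..N, ‖dirichletPoly N c t‖ ^ 2
      ≤ Real.exp 1 * ∫ t, ‖dirichletPoly N c t‖ ^ 2 * Real.exp (-((N : ℝ) ^ 2)⁻¹ * t ^ 2) :=
        integral_norm_trigSum_sq_le_gaussian _ _ _ hN0
    _ ≤ Real.exp 1 * (√(Real.pi / ((N : ℝ) ^ 2)⁻¹) * ∑ m ∈ Finset.Icc 1 N, ∑ n ∈ Finset.Icc 1 N,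
          ‖c m‖ * ‖c n‖ *
            Real.exp (-(-Real.log m - -Real.log n) ^ 2 / (4 * ((N : ℝ) ^ 2)⁻¹))) := by
        gcongr
        exact integral_norm_trigSum_sq_mul_gaussian_le _ _ _ (by positivity)
    _ ≤ Real.exp 1 * (√(Real.pi / ((N : ℝ) ^ 2)⁻¹) *
          (gaussianRowBound * ∑ n ∈ Finset.Icc 1 N, ‖c n‖ ^ 2)) := by
        gcongr
        exact sum_sum_mul_mul_le_of_sum_le _ _ (fun _ _ => (Real.exp_pos _).le)
          (fun m n => by rw [sub_sq_comm]) fun m hm => sum_exp_neg_log_sub_log_sq_le hm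
    _ = _ := by
        rw [div_inv_eq_mul, Real.sqrt_mul Real.pi_pos.le, Real.sqrt_sq hN0.le]
        ring

end DirichletPolynomial

section MeanSquare

variable {M N : ℕ} {σ a b : ℝ}

lemma integral_norm_add_sq_le {f g : ℝ → ℂ} (hf : Continuous f) (hg : Continuous g)
    (hab : a ≤ b) :
    ∫ t in a..b, ‖f t + g t‖ ^ 2 ≤ 2 * ((∫ t in a..b, ‖f t‖ ^ 2) + ∫ t in a..b, ‖g t‖ ^ 2) := by
  have hint {h : ℝ → ℝ} (hh : Continuous h) : IntervalIntegrable h volume a b :=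
    hh.intervalIntegrable a b
  rw [← intervalIntegral.integral_add (hint (by fun_prop)) (hint (by fun_prop)),
    ← intervalIntegral.integral_const_mul]
  refine intervalIntegral.integral_mono_on hab (hint (by fun_prop)) (hint (by fun_prop))
    fun t _ => ?_
  calc ‖f t + g t‖ ^ 2 ≤ (‖f t‖ + ‖g t‖) ^ 2 := by gcongr; exact norm_add_le _ _
    _ ≤ 2 * (‖f t‖ ^ 2 + ‖g t‖ ^ 2) := add_sq_le

lemma continuous_riemannZeta_comp {X : Type*} [TopologicalSpace X] {g : X → ℂ}
    (hg : Continuous g) (hg1 : ∀ x, (g x).re < 1) : Continuous fun x => riemannZeta (g x) := by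
  refine continuous_iff_continuousAt.2 fun x => ?_
  have hne : g x ≠ 1 := fun h => by simpa [h] using hg1 x
  exact (differentiableAt_riemannZeta hne).continuousAt.comp hg.continuousAt

lemma norm_sq_add_mul_I (x y : ℝ) : ‖(x : ℂ) + y * I‖ ^ 2 = x ^ 2 + y ^ 2 := by
  rw [← normSq_eq_norm_sq, normSq_add_mul_I]

lemma norm_rpow_mul_norm_fractTail_sq_le (N : ℕ) (p x : ℝ) :
    ‖x ^ p * ‖fractTail N x‖ ^ 2‖ ≤ (Set.Ioi (N : ℝ)).indicator (fun x => x ^ p) x := by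
  by_cases hx : x ∈ Set.Ioi (N : ℝ)
  · have hx0 : 0 < x := N.cast_nonneg.trans_lt hx
    rw [Set.indicator_of_mem hx, Real.norm_of_nonneg (by positivity)]
    exact mul_le_of_le_one_right (by positivity)
      (pow_le_one₀ (norm_nonneg _) (norm_fractTail_le_one N x))
  · rw [Set.indicator_of_notMem hx, fractTail_of_le (not_lt.1 hx)]
    simp

lemma integrable_indicator_Ioi_rpow (hN : 1 ≤ N) {p : ℝ} (hp : p < -1) :
    Integrable ((Set.Ioi (N : ℝ)).indicator fun x : ℝ => x ^ p) :=
  (integrableOn_Ioi_rpow_of_lt hp (by exact_mod_cast hN)).integrable_indicator measurableSet_Ioi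

lemma integrable_rpow_mul_norm_fractTail_sq (hN : 1 ≤ N) {p : ℝ} (hp : p < -1) :
    Integrable fun x : ℝ => x ^ p * ‖fractTail N x‖ ^ 2 := by
  have hm := measurable_fractTail N
  exact (integrable_indicator_Ioi_rpow hN hp).mono' (by fun_prop)
    (Eventually.of_forall (norm_rpow_mul_norm_fractTail_sq_le N p))

lemma setIntegral_rpow_mul_norm_fractTail_sq_le (hN : 1 ≤ N) {p : ℝ} (hp : p < -1) :
    ∫ x in Set.Ioi (0 : ℝ), x ^ p * ‖fractTail N x‖ ^ 2 ≤ -(N : ℝ) ^ (p + 1) / (p + 1) := by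
  calc ∫ x in Set.Ioi (0 : ℝ), x ^ p * ‖fractTail N x‖ ^ 2
      ≤ ∫ x in Set.Ioi (0 : ℝ), (Set.Ioi (N : ℝ)).indicator (fun x => x ^ p) x :=
        setIntegral_mono (integrable_rpow_mul_norm_fractTail_sq hN hp).integrableOn
          (integrable_indicator_Ioi_rpow hN hp).integrableOn
          fun x => (le_abs_self _).trans (norm_rpow_mul_norm_fractTail_sq_le N p x)
    _ = ∫ x in Set.Ioi (N : ℝ), x ^ p := by
        rw [setIntegral_indicator measurableSet_Ioi,
          Set.inter_eq_self_of_subset_right (Set.Ioi_subset_Ioi N.cast_nonneg)]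
    _ = -(N : ℝ) ^ (p + 1) / (p + 1) :=
        integral_Ioi_rpow_of_lt hp (by exact_mod_cast hN)

lemma continuous_mellin_fractTail_vertical (hN : 1 ≤ N) (hσ : 0 < σ) :
    Continuous fun t : ℝ => mellin (fractTail N) (-(σ + t * I)) := by
  refine continuous_iff_continuousAt.2 fun t => ?_
  exact (differentiableAt_mellin_fractTail hN (by simpa using hσ)).continuousAt.comp
    (f := fun t : ℝ => -((σ : ℂ) + t * I)) (by fun_prop)

lemma integral_norm_mellin_fractTail_sq_le (hN : 1 ≤ N) (hσ : 0 < σ) :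
    ∫ t in (-N : ℝ)..N, ‖mellin (fractTail N) (-(σ + t * I))‖ ^ 2 ≤
      Real.pi / σ * (N : ℝ) ^ (-(2 * σ)) := by
  have hp : 2 * (-σ) - 1 < -1 := by linarith
  have hconv : MellinConvergent (fractTail N) ((-σ : ℝ) : ℂ) :=
    mellinConvergent_fractTail hN (by simpa using hσ)
  have hL2 := (integrable_rpow_mul_norm_fractTail_sq hN hp).integrableOn (s := Set.Ioi 0)
  calc ∫ t in (-N : ℝ)..N, ‖mellin (fractTail N) (-(σ + t * I))‖ ^ 2
      = ∫ t in (-N : ℝ)..N, ‖mellin (fractTail N) ((-σ : ℝ) + t * I)‖ ^ 2 := by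
        rw [← neg_neg (N : ℝ), ← intervalIntegral.integral_comp_neg, neg_neg]
        refine intervalIntegral.integral_congr fun t _ => ?_
        simp only [ofReal_neg, neg_add, neg_mul, neg_neg]
    _ ≤ ∫ t : ℝ, ‖mellin (fractTail N) ((-σ : ℝ) + t * I)‖ ^ 2 := by
        rw [intervalIntegral.integral_of_le (by linarith [N.cast_nonneg (α := ℝ)])]
        exact setIntegral_le_integral (integrable_norm_mellin_sq hconv hL2)
          (Eventually.of_forall fun t => by positivity)
    _ = 2 * Real.pi * ∫ x in Set.Ioi (0 : ℝ), x ^ (2 * (-σ) - 1) * ‖fractTail N x‖ ^ 2 :=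
        integral_norm_mellin_sq hconv hL2
    _ ≤ 2 * Real.pi * (-(N : ℝ) ^ (2 * (-σ) - 1 + 1) / (2 * (-σ) - 1 + 1)) := by
        gcongr
        exact setIntegral_rpow_mul_norm_fractTail_sq_le hN hp
    _ = Real.pi / σ * (N : ℝ) ^ (-(2 * σ)) := by
        rw [sub_add_cancel, mul_neg]
        field_simp

lemma natCast_sq_mul_rpow (N : ℕ) {x : ℝ} (hx : 2 + x ≠ 0) :
    (N : ℝ) ^ 2 * (N : ℝ) ^ x = (N : ℝ) ^ (2 + x) := by
  rw [Real.rpow_add' N.cast_nonneg hx, Real.rpow_two]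

lemma integral_norm_mul_mellin_fractTail_sq_le (hN : 1 ≤ N) (hσ : 1 / 2 ≤ σ) (hσ1 : σ < 1) :
    ∫ t in (-N : ℝ)..N, ‖(σ + t * I) * mellin (fractTail N) (-(σ + t * I))‖ ^ 2 ≤
      4 * Real.pi * (N : ℝ) ^ (2 - 2 * σ) := by
  have hσ0 : 0 < σ := by linarith
  have hcont := continuous_mellin_fractTail_vertical hN hσ0
  have hN1 : (1 : ℝ) ≤ N := by exact_mod_cast hN
  calc ∫ t in (-N : ℝ)..N, ‖(σ + t * I) * mellin (fractTail N) (-(σ + t * I))‖ ^ 2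
      ≤ ∫ t in (-N : ℝ)..N, 2 * N ^ 2 * ‖mellin (fractTail N) (-(σ + t * I))‖ ^ 2 := by
        refine intervalIntegral.integral_mono_on (by linarith)
          (Continuous.intervalIntegrable (by fun_prop) _ _)
          (Continuous.intervalIntegrable (by fun_prop) _ _) fun t ht => ?_
        rw [norm_mul, mul_pow, norm_sq_add_mul_I]
        gcongr
        nlinarith [sq_le_sq' ht.1 ht.2]
    _ ≤ 2 * N ^ 2 * (Real.pi / σ * (N : ℝ) ^ (-(2 * σ))) := by
        rw [intervalIntegral.integral_const_mul]
        gcongr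
        exact integral_norm_mellin_fractTail_sq_le hN hσ0
    _ ≤ 2 * N ^ 2 * (2 * Real.pi * (N : ℝ) ^ (-(2 * σ))) := by
        gcongr
        rw [div_le_iff₀ hσ0]
        nlinarith [Real.pi_pos]
    _ = 4 * Real.pi * (N : ℝ) ^ (2 - 2 * σ) := by
        rw [sub_eq_add_neg, ← natCast_sq_mul_rpow N (by linarith)]
        ring

lemma continuous_cpow_div_vertical (hN : 1 ≤ N) (hσ : σ < 1) :
    Continuous fun t : ℝ => (N : ℂ) ^ (1 - (σ + t * I)) / (σ + t * I - 1) := by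
  have hN0 : (N : ℂ) ≠ 0 := by exact_mod_cast Nat.one_le_iff_ne_zero.1 hN
  refine (Continuous.const_cpow (by fun_prop) (Or.inl hN0)).div (by fun_prop) fun t h => ?_
  have hre : σ - 1 = 0 := by simpa using congrArg re h
  linarith

lemma integral_norm_cpow_div_sq_le (hN : 1 ≤ N) (hσ : 0 ≤ σ) (hσ1 : σ < 1) :
    ∫ t in (-N : ℝ)..N, ‖(N : ℂ) ^ (1 - (σ + t * I)) / (σ + t * I - 1)‖ ^ 2 ≤
      Real.pi / (1 - σ) ^ 2 * (N : ℝ) ^ (2 - 2 * σ) := by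
  have hNN : (-N : ℝ) ≤ N := by linarith [N.cast_nonneg (α := ℝ)]
  have h1σ : 0 < 1 - σ := by linarith
  calc ∫ t in (-N : ℝ)..N, ‖(N : ℂ) ^ (1 - (σ + t * I)) / (σ + t * I - 1)‖ ^ 2
      ≤ ∫ t in (-N : ℝ)..N, (N : ℝ) ^ (2 - 2 * σ) / (1 - σ) ^ 2 * (1 + t ^ 2)⁻¹ := by
        refine intervalIntegral.integral_mono_on hNN
          ((continuous_cpow_div_vertical hN hσ1).norm.pow 2 |>.intervalIntegrable _ _)
          ((integrable_inv_one_add_sq.const_mul _).intervalIntegrable) fun t _ => ?_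
        have hnum : ‖(N : ℂ) ^ (1 - (σ + t * I))‖ ^ 2 = (N : ℝ) ^ (2 - 2 * σ) := by
          rw [norm_natCast_cpow_of_pos hN, ← Real.rpow_mul_natCast N.cast_nonneg]
          congr 1
          simp
          ring
        have hden : ‖(σ : ℂ) + t * I - 1‖ ^ 2 = (1 - σ) ^ 2 + t ^ 2 := by
          rw [show (σ : ℂ) + t * I - 1 = (σ - 1 : ℝ) + t * I by push_cast; ring,
            norm_sq_add_mul_I, sub_sq_comm]
        rw [norm_div, div_pow, hnum, hden, div_mul_eq_mul_div, div_eq_mul_inv, mul_div_assoc]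
        gcongr
        rw [← one_div, ← one_div, div_div, div_le_div_iff₀ (by positivity) (by positivity)]
        have : (1 - σ) ^ 2 ≤ 1 := pow_le_one₀ h1σ.le (by linarith)
        nlinarith [sq_nonneg t]
    _ ≤ (N : ℝ) ^ (2 - 2 * σ) / (1 - σ) ^ 2 * ∫ t : ℝ, (1 + t ^ 2)⁻¹ := by
        rw [intervalIntegral.integral_const_mul, intervalIntegral.integral_of_le hNN]
        exact mul_le_mul_of_nonneg_left (setIntegral_le_integral integrable_inv_one_add_sq
          (Eventually.of_forall fun t => by positivity)) (by positivity)
    _ = Real.pi / (1 - σ) ^ 2 * (N : ℝ) ^ (2 - 2 * σ) := by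
        rw [integral_univ_inv_one_add_sq]
        ring

lemma add_mul_I_ne_one (hσ : σ < 1) (t : ℝ) : (σ : ℂ) + t * I ≠ 1 := fun h => by
  simpa using hσ.ne (by simpa using congrArg re h)

lemma continuous_riemannZeta_sub_zetaPartialSum (M : ℕ) (hσ : σ < 1) :
    Continuous fun t : ℝ => riemannZeta (σ + t * I) - zetaPartialSum M (σ + t * I) :=
  (continuous_riemannZeta_comp (by fun_prop) fun t => by simpa using hσ).sub
    ((differentiable_zetaPartialSum M).continuous.comp (by fun_prop))

lemma integral_norm_riemannZeta_sub_zetaPartialSum_sq_le (hN : 1 ≤ N) (hσ : 1 / 2 ≤ σ)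
    (hσ1 : σ < 1) :
    ∫ t in (-N : ℝ)..N, ‖riemannZeta (σ + t * I) - zetaPartialSum N (σ + t * I)‖ ^ 2 ≤
      2 * (Real.pi / (1 - σ) ^ 2 + 4 * Real.pi) * (N : ℝ) ^ (2 - 2 * σ) := by
  have hNN : (-N : ℝ) ≤ N := by linarith [N.cast_nonneg (α := ℝ)]
  have hσ0 : 0 < σ := by linarith
  have heq (t : ℝ) : riemannZeta (σ + t * I) - zetaPartialSum N (σ + t * I) =
      (N : ℂ) ^ (1 - (σ + t * I)) / (σ + t * I - 1) +
        -((σ + t * I) * mellin (fractTail N) (-(σ + t * I))) := by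
    rw [riemannZeta_eq_zetaPartialSum_add hN (by simpa using hσ0) (add_mul_I_ne_one hσ1 t)]
    ring
  simp only [heq]
  have hcont := continuous_mellin_fractTail_vertical hN hσ0
  refine (integral_norm_add_sq_le (continuous_cpow_div_vertical hN hσ1) (by fun_prop) hNN).trans ?_
  simp only [norm_neg]
  linarith [integral_norm_cpow_div_sq_le hN hσ0.le hσ1,
    integral_norm_mul_mellin_fractTail_sq_le hN hσ hσ1]

lemma zetaPartialSum_sub_eq_dirichletPoly (hMN : M ≤ N) (σ t : ℝ) :
    zetaPartialSum N (σ + t * I) - zetaPartialSum M (σ + t * I) =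
      dirichletPoly N (fun n => if M < n then ((n : ℝ) ^ (-σ) : ℝ) else 0) t := by
  have hsdiff : Finset.Icc 1 N \ Finset.Icc 1 M = {n ∈ Finset.Icc 1 N | M < n} := by
    ext n
    simp only [Finset.mem_sdiff, Finset.mem_Icc, Finset.mem_filter]
    omega
  rw [zetaPartialSum, zetaPartialSum, ← Finset.sum_sdiff (Finset.Icc_subset_Icc le_rfl hMN),
    add_sub_cancel_right, hsdiff, Finset.sum_filter, dirichletPoly, trigSum]
  refine Finset.sum_congr rfl fun n hn => ?_
  split_ifs
  · have hn0 : (n : ℂ) ≠ 0 := by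
      exact_mod_cast Nat.one_le_iff_ne_zero.1 (Finset.mem_Icc.1 hn).1
    rw [neg_add, cpow_add _ _ hn0, ofReal_cpow n.cast_nonneg, cpow_def_of_ne_zero hn0 (-(t * I)),
      ← natCast_log]
    push_cast
    ring_nf
  · simp

lemma integral_norm_zetaPartialSum_sub_sq_le (hN : 1 ≤ N) (hMN : M ≤ N) (σ : ℝ) :
    ∫ t in (-N : ℝ)..N, ‖zetaPartialSum N (σ + t * I) - zetaPartialSum M (σ + t * I)‖ ^ 2 ≤
      Real.exp 1 * √Real.pi * gaussianRowBound * N *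
        ∑ n ∈ Finset.Ioc M N, (n : ℝ) ^ (-(2 * σ)) := by
  simp only [zetaPartialSum_sub_eq_dirichletPoly hMN]
  refine (integral_norm_dirichletPoly_sq_le hN _).trans_eq ?_
  have hIoc : Finset.Ioc M N = {n ∈ Finset.Icc 1 N | M < n} := by
    ext n
    simp only [Finset.mem_Ioc, Finset.mem_Icc, Finset.mem_filter]
    omega
  rw [hIoc, Finset.sum_filter]
  congr 1
  refine Finset.sum_congr rfl fun n _ => ?_
  split_ifs
  · rw [norm_real, Real.norm_of_nonneg (by positivity), ← Real.rpow_mul_natCast n.cast_nonneg]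
    congr 1
    push_cast
    ring
  · simp

lemma integral_norm_riemannZeta_sub_zetaPartialSum_sq_le_of_le (hN : 1 ≤ N) (hMN : M ≤ N)
    (hσ : 1 / 2 ≤ σ) (hσ1 : σ < 1) :
    ∫ t in (-N : ℝ)..N, ‖riemannZeta (σ + t * I) - zetaPartialSum M (σ + t * I)‖ ^ 2 ≤
      2 * (Real.exp 1 * √Real.pi * gaussianRowBound * N *
        ∑ n ∈ Finset.Ioc M N, (n : ℝ) ^ (-(2 * σ)) +
        2 * (Real.pi / (1 - σ) ^ 2 + 4 * Real.pi) * (N : ℝ) ^ (2 - 2 * σ)) := by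
  have hNN : (-N : ℝ) ≤ N := by linarith [N.cast_nonneg (α := ℝ)]
  have hcont (K : ℕ) : Continuous fun t : ℝ => zetaPartialSum K (σ + t * I) :=
    (differentiable_zetaPartialSum K).continuous.comp (by fun_prop)
  calc ∫ t in (-N : ℝ)..N, ‖riemannZeta (σ + t * I) - zetaPartialSum M (σ + t * I)‖ ^ 2
      = ∫ t in (-N : ℝ)..N, ‖(zetaPartialSum N (σ + t * I) - zetaPartialSum M (σ + t * I)) +
          (riemannZeta (σ + t * I) - zetaPartialSum N (σ + t * I))‖ ^ 2 := by
        simp only [add_comm (zetaPartialSum N _ - _), sub_add_sub_cancel]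
    _ ≤ _ := integral_norm_add_sq_le ((hcont N).sub (hcont M))
        (continuous_riemannZeta_sub_zetaPartialSum N hσ1) hNN
    _ ≤ _ := by
        gcongr
        · exact integral_norm_zetaPartialSum_sub_sq_le hN hMN σ
        · exact integral_norm_riemannZeta_sub_zetaPartialSum_sq_le hN hσ hσ1

lemma exists_sum_Ioc_le {f : ℕ → ℝ} (hf : Summable f) {δ : ℝ} (hδ : 0 < δ) :
    ∃ M₀, ∀ M ≥ M₀, ∀ N, ∑ n ∈ Finset.Ioc M N, f n ≤ δ := by
  obtain ⟨s, hs⟩ := summable_iff_vanishing_norm.1 hf δ hδ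
  refine ⟨s.sup id, fun M hM N => ?_⟩
  have hdisj : Disjoint (Finset.Ioc M N) s := Finset.disjoint_left.2 fun n hn hns =>
    ((Finset.le_sup (f := id) hns).trans hM).not_gt (Finset.mem_Ioc.1 hn).1
  exact (le_abs_self _).trans (hs _ hdisj).le

lemma exists_integral_norm_riemannZeta_sub_sq_le (ha : 1 / 2 < a) (hb : b < 1) :
    ∃ C > 0, ∀ σ ∈ Set.Icc a b, ∀ M N : ℕ, 1 ≤ N → M ≤ N →
    ∫ t in (-N : ℝ)..N, ‖riemannZeta (σ + t * I) - zetaPartialSum M (σ + t * I)‖ ^ 2 ≤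
      C * N * (∑ n ∈ Finset.Ioc M N, (n : ℝ) ^ (-(2 * a)) + (N : ℝ) ^ (1 - 2 * a)) := by
  set C₁ := Real.exp 1 * √Real.pi * gaussianRowBound
  set C₂ := 2 * (Real.pi / (1 - b) ^ 2 + 4 * Real.pi)
  have hC₁ : 0 < C₁ := by have := gaussianRowBound_pos; positivity
  refine ⟨2 * (C₁ + C₂), by positivity, fun σ hσ M N hN hMN => ?_⟩
  have hN1 : (1 : ℝ) ≤ N := by exact_mod_cast hN
  have haσ : a ≤ σ := hσ.1
  have ha1 : a < 1 := haσ.trans_lt (hσ.2.trans_lt hb)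
  set S := ∑ n ∈ Finset.Ioc M N, (n : ℝ) ^ (-(2 * a))
  have hS : ∑ n ∈ Finset.Ioc M N, (n : ℝ) ^ (-(2 * σ)) ≤ S := by
    refine Finset.sum_le_sum fun n hn => Real.rpow_le_rpow_of_exponent_le ?_ (by linarith)
    exact_mod_cast (Nat.zero_le M).trans_lt (Finset.mem_Ioc.1 hn).1
  have hC : 2 * (Real.pi / (1 - σ) ^ 2 + 4 * Real.pi) ≤ C₂ := by
    have := hσ.2
    simp only [C₂]
    gcongr
  calc _ ≤ 2 * (C₁ * N * ∑ n ∈ Finset.Ioc M N, (n : ℝ) ^ (-(2 * σ)) +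
          2 * (Real.pi / (1 - σ) ^ 2 + 4 * Real.pi) * (N : ℝ) ^ (2 - 2 * σ)) :=
        integral_norm_riemannZeta_sub_zetaPartialSum_sq_le_of_le hN hMN (ha.le.trans haσ)
          (hσ.2.trans_lt hb)
    _ ≤ 2 * (C₁ * N * S + C₂ * (N : ℝ) ^ (2 - 2 * a)) := by
        gcongr
    _ = 2 * (C₁ * (N * S) + C₂ * (N * (N : ℝ) ^ (1 - 2 * a))) := by
        rw [← Real.rpow_one_add' N.cast_nonneg (by linarith), ← add_sub_assoc, one_add_one_eq_two,
          mul_assoc C₁]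
    _ ≤ 2 * (C₁ + C₂) * N * (S + (N : ℝ) ^ (1 - 2 * a)) := by
        have h₁ : 0 ≤ C₁ * (N * (N : ℝ) ^ (1 - 2 * a)) := by positivity
        have h₂ : 0 ≤ C₂ * (N * S) := by positivity
        linarith

lemma integral_norm_riemannZeta_sub_zetaPartialSum_sq_eventually_le (ha : 1 / 2 < a) (hb : b < 1)
    {δ : ℝ} (hδ : 0 < δ) :
    ∃ M₀ : ℕ, ∀ M ≥ M₀, ∀ᶠ T : ℝ in atTop, ∀ σ ∈ Set.Icc a b,
      ∫ t in -T..T, ‖riemannZeta (σ + t * I) - zetaPartialSum M (σ + t * I)‖ ^ 2 ≤ δ * T := by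
  obtain ⟨C, hC, hmean⟩ := exists_integral_norm_riemannZeta_sub_sq_le ha hb
  have hδC : 0 < δ / (4 * C) := by positivity
  obtain ⟨M₀, hM₀⟩ := exists_sum_Ioc_le (Real.summable_nat_rpow.2 (by linarith : -(2 * a) < -1)) hδC
  refine ⟨M₀, fun M hM => ?_⟩
  have hpow : ∀ᶠ N : ℕ in atTop, (N : ℝ) ^ (1 - 2 * a) ≤ δ / (4 * C) := by
    have h := (tendsto_rpow_neg_atTop (by linarith : 0 < 2 * a - 1)).comp
      tendsto_natCast_atTop_atTop
    simp only [neg_sub] at h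
    exact (h.eventually_lt_const hδC).mono fun _ => le_of_lt
  filter_upwards [tendsto_nat_ceil_atTop.eventually (hpow.and (eventually_ge_atTop M)),
    eventually_ge_atTop 1] with T ⟨hN, hMN⟩ hT σ hσ
  set N := ⌈T⌉₊
  have hTN : T ≤ N := Nat.le_ceil T
  have hN2 : (N : ℝ) ≤ 2 * T := by linarith [Nat.ceil_lt_add_one (zero_le_one.trans hT)]
  have hcont := continuous_riemannZeta_sub_zetaPartialSum M (hσ.2.trans_lt hb)
  calc ∫ t in -T..T, ‖riemannZeta (σ + t * I) - zetaPartialSum M (σ + t * I)‖ ^ 2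
      ≤ ∫ t in (-N : ℝ)..N, ‖riemannZeta (σ + t * I) - zetaPartialSum M (σ + t * I)‖ ^ 2 :=
        intervalIntegral.integral_mono_interval (by linarith) (by linarith) hTN
          (ae_of_all _ fun t => by positivity) ((hcont.norm.pow 2).intervalIntegrable _ _)
    _ ≤ C * N * (δ / (4 * C) + δ / (4 * C)) := by
        refine (hmean σ hσ M N (by exact_mod_cast hT.trans hTN) hMN).trans ?_
        gcongr
        exact hM₀ M hM N
    _ = N * δ / 2 := by field_simp; ring
    _ ≤ 2 * T * δ / 2 := by gcongr
    _ = δ * T := by ring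

lemma integral_comp_add_mul_le {f : ℝ → ℝ} (hf : Continuous f) (hf0 : ∀ t, 0 ≤ f t) {c y B T : ℝ}
    (hc : c ≠ 0) (hy : |y| ≤ B) (hT : 0 ≤ T) :
    ∫ t in 0..T, f (y + c * t) ≤ |c|⁻¹ * ∫ t in -(|c| * T + B)..|c| * T + B, f t := by
  have hcT : |c * T| = |c| * T := by rw [abs_mul, abs_of_nonneg hT]
  have hB : 0 ≤ |c| * T + B := add_nonneg (by positivity) ((abs_nonneg y).trans hy)
  have hsub : Set.uIoc (y + c * 0) (y + c * T) ⊆ Set.Ioc (-(|c| * T + B)) (|c| * T + B) := by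
    have := abs_le.1 hy
    have := abs_le.1 hcT.le
    have : 0 ≤ |c| * T := by positivity
    exact Set.Ioc_subset_Ioc (le_min (by linarith) (by linarith))
      (max_le (by linarith) (by linarith))
  rw [intervalIntegral.integral_comp_add_mul _ hc, smul_eq_mul]
  refine (le_abs_self _).trans ?_
  rw [abs_mul, abs_inv, ← Real.norm_eq_abs (∫ t in _.._, f t),
    intervalIntegral.norm_intervalIntegral_eq, Real.norm_of_nonneg (integral_nonneg hf0),
    intervalIntegral.integral_of_le (by linarith)]
  exact mul_le_mul_of_nonneg_left (setIntegral_mono_set hf.integrableOn_Ioc (ae_of_all _ hf0)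
    hsub.eventuallyLE) (by positivity)

lemma integral_norm_riemannZeta_sub_zetaPartialSum_sq_shift_eventually_le (ha : 1 / 2 < a)
    (hb : b < 1) (B : ℝ) {c : ℝ} (hc : c ≠ 0) {δ : ℝ} (hδ : 0 < δ) :
    ∃ M₀ : ℕ, ∀ M ≥ M₀, ∀ᶠ T : ℝ in atTop, ∀ z : ℂ, z.re ∈ Set.Icc a b → |z.im| ≤ B →
      ∫ t in 0..T, ‖riemannZeta (z + (c * t : ℝ) * I) - zetaPartialSum M (z + (c * t : ℝ) * I)‖ ^ 2
        ≤ δ * T := by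
  obtain ⟨M₀, hM₀⟩ :=
    integral_norm_riemannZeta_sub_zetaPartialSum_sq_eventually_le ha hb (half_pos hδ)
  have hc0 : 0 < |c| := abs_pos.2 hc
  refine ⟨M₀, fun M hM => ?_⟩
  have hlim : Tendsto (fun T : ℝ => |c| * T) atTop atTop := tendsto_id.const_mul_atTop hc0
  filter_upwards [(tendsto_atTop_add_const_right _ B hlim).eventually (hM₀ M hM),
    hlim.eventually_ge_atTop B, eventually_ge_atTop 0] with T hmean hBT hT z hz hzB
  have hcont := (continuous_riemannZeta_sub_zetaPartialSum M (hz.2.trans_lt hb)).norm.pow 2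
  have hz_eq (t : ℝ) : z + (c * t : ℝ) * I = z.re + (z.im + c * t : ℝ) * I := by
    apply Complex.ext <;> simp
  simp only [hz_eq]
  calc _ ≤ |c|⁻¹ * _ := integral_comp_add_mul_le hcont (fun t => sq_nonneg _) hc hzB hT
    _ ≤ |c|⁻¹ * (δ / 2 * (|c| * T + B)) := by
        gcongr
        exact hmean z.re hz
    _ ≤ |c|⁻¹ * (δ / 2 * (|c| * T + |c| * T)) := by gcongr
    _ = δ * T := by field_simp; ring

end MeanSquare

section MeanValue

open scoped ComplexConjugate

variable {ι : Type*} {s : Finset ι} {l : ι → ℝ}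

lemma norm_intervalIntegral_cexp_le {x : ℝ} (hx : x ≠ 0) (T : ℝ) :
    ‖∫ t in 0..T, cexp (I * x * t)‖ ≤ 2 / |x| := by
  have hIx : I * (x : ℂ) ≠ 0 := mul_ne_zero I_ne_zero (by exact_mod_cast hx)
  have hnorm (t : ℝ) : ‖cexp (I * x * t)‖ = 1 := by
    rw [mul_assoc, mul_comm, ← ofReal_mul, norm_exp_ofReal_mul_I]
  have hIxn : ‖I * (x : ℂ)‖ = |x| := by simp
  rw [integral_exp_mul_complex hIx, norm_div, hIxn]
  gcongr
  exact (norm_sub_le _ _).trans (by rw [hnorm, hnorm, one_add_one_eq_two])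

lemma ofReal_integral_norm_trigSum_sq (s : Finset ι) (c : ι → ℂ) (l : ι → ℝ) (T : ℝ) :
    ((∫ t in 0..T, ‖trigSum s c l t‖ ^ 2 : ℝ) : ℂ) =
      ∑ j ∈ s, ∑ k ∈ s, c j * conj (c k) * ∫ t in 0..T, cexp (I * (l j - l k : ℝ) * t) := by
  rw [← intervalIntegral.integral_ofReal]
  simp only [ofReal_norm_trigSum_sq, ← intervalIntegral.integral_const_mul]
  rw [intervalIntegral.integral_finsetSum fun _ _ =>
    Continuous.intervalIntegrable (by fun_prop) _ _]
  refine Finset.sum_congr rfl fun j _ => intervalIntegral.integral_finsetSum fun _ _ =>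
    Continuous.intervalIntegrable (by fun_prop) _ _

lemma abs_integral_norm_trigSum_sq_sub_le (hl : Set.InjOn l s) (c : ι → ℂ) (T : ℝ) :
    |(∫ t in 0..T, ‖trigSum s c l t‖ ^ 2) - T * ∑ j ∈ s, ‖c j‖ ^ 2| ≤
      ∑ j ∈ s, ∑ k ∈ s, ‖c j‖ * ‖c k‖ * (2 / |l j - l k|) := by
  classical
  have hdiag : ((T * ∑ j ∈ s, ‖c j‖ ^ 2 : ℝ) : ℂ) =
      ∑ j ∈ s, ∑ k ∈ s, if j = k then T * (‖c j‖ : ℂ) ^ 2 else 0 := by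
    push_cast
    rw [Finset.mul_sum]
    exact Finset.sum_congr rfl fun j hj => by rw [Finset.sum_ite_eq, if_pos hj]
  rw [← Real.norm_eq_abs, ← norm_real, ofReal_sub, hdiag, ofReal_integral_norm_trigSum_sq,
    ← Finset.sum_sub_distrib]
  refine norm_sum_le_of_le _ fun j hj => ?_
  rw [← Finset.sum_sub_distrib]
  refine norm_sum_le_of_le _ fun k hk => ?_
  split_ifs with hjk
  · subst hjk
    simp [mul_conj, normSq_eq_norm_sq, mul_comm]
  · rw [sub_zero, norm_mul, norm_mul, RCLike.norm_conj]
    gcongr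
    exact norm_intervalIntegral_cexp_le (sub_ne_zero.2 fun h => hjk (hl hj hk h)) T

lemma eventually_abs_integral_norm_trigSum_sq_sub_le (hl : Set.InjOn l s) {δ : ℝ} (hδ : 0 < δ) :
    ∀ᶠ T : ℝ in atTop, ∀ c : ι → ℂ, (∀ j ∈ s, ‖c j‖ ≤ 1) →
      |(∫ t in 0..T, ‖trigSum s c l t‖ ^ 2) - T * ∑ j ∈ s, ‖c j‖ ^ 2| ≤ δ * T := by
  filter_upwards [(tendsto_id.const_mul_atTop hδ).eventually_ge_atTop
    (∑ j ∈ s, ∑ k ∈ s, 2 / |l j - l k|)] with T hT c hc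
  refine (abs_integral_norm_trigSum_sq_sub_le hl c T).trans (le_trans ?_ hT)
  refine Finset.sum_le_sum fun j hj => Finset.sum_le_sum fun k hk => ?_
  exact mul_le_of_le_one_left (by positivity)
    (mul_le_one₀ (hc j hj) (norm_nonneg _) (hc k hk))

end MeanValue

section Folner

lemma card_divisors_pow {n : ℕ} (hn : n ≠ 0) (k : ℕ) :
    (n ^ k).divisors.card = ∏ p ∈ n.primeFactors, (k * n.factorization p + 1) := by
  rcases eq_or_ne k 0 with rfl | hk
  · simp
  · rw [Nat.card_divisors (pow_ne_zero _ hn), Nat.primeFactors_pow _ hk]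
    simp

lemma card_divisors_pow_succ_le {n k : ℕ} (hn : n ≠ 0) (hk : 0 < k) :
    ((n ^ (k + 1)).divisors.card : ℝ) ≤
      (1 + 1 / (k : ℝ)) ^ n.primeFactors.card * (n ^ k).divisors.card := by
  rw [card_divisors_pow hn, card_divisors_pow hn, ← Finset.prod_const, Nat.cast_prod,
    Nat.cast_prod, ← Finset.prod_mul_distrib]
  refine Finset.prod_le_prod (fun _ _ => by positivity) fun p _ => ?_
  push_cast
  calc ((k : ℝ) + 1) * n.factorization p + 1
      ≤ (k + 1) * n.factorization p + 1 + 1 / k := le_add_of_nonneg_right (by positivity)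
    _ = (1 + 1 / k) * (k * n.factorization p + 1) := by field_simp; ring

lemma exists_card_divisors_sdiff_le {n : ℕ} (hn : n ≠ 0) {ε : ℝ} (hε : 0 < ε) :
    ∃ k, (((n ^ (k + 1)).divisors \ (n ^ k).divisors).card : ℝ) ≤
      ε * (n ^ (k + 1)).divisors.card := by
  have hlim : Tendsto (fun k : ℕ => (1 + 1 / (k : ℝ)) ^ n.primeFactors.card) atTop (nhds 1) := by
    simpa using (tendsto_one_div_atTop_nhds_zero_nat.const_add (1 : ℝ)).pow n.primeFactors.card
  obtain ⟨k, hkε, hk⟩ := ((hlim.eventually_lt_const (lt_add_of_pos_right 1 hε)).and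
    (eventually_gt_atTop 0)).exists
  have hsub : (n ^ k).divisors ⊆ (n ^ (k + 1)).divisors :=
    Nat.divisors_subset_of_dvd (pow_ne_zero _ hn) (pow_dvd_pow _ k.le_succ)
  refine ⟨k, ?_⟩
  rw [Finset.cast_card_sdiff hsub, sub_le_iff_le_add]
  calc ((n ^ (k + 1)).divisors.card : ℝ)
      ≤ (1 + 1 / (k : ℝ)) ^ n.primeFactors.card * (n ^ k).divisors.card :=
        card_divisors_pow_succ_le hn hk
    _ ≤ (1 + ε) * (n ^ k).divisors.card := by gcongr
    _ = ε * (n ^ k).divisors.card + (n ^ k).divisors.card := by ring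
    _ ≤ ε * (n ^ (k + 1)).divisors.card + (n ^ k).divisors.card := by gcongr

lemma exists_card_filter_mul_notMem_le (N : ℕ) {ε : ℝ} (hε : 0 < ε) :
    ∃ S : Finset ℚ, S.Nonempty ∧ (∀ q ∈ S, 0 < q) ∧
      ∀ n ∈ Finset.Icc 1 N, ({q ∈ S | (n : ℚ) * q ∉ S}.card : ℝ) ≤ ε * S.card := by
  obtain ⟨k, hk⟩ := exists_card_divisors_sdiff_le N.factorial_ne_zero hε
  refine ⟨(N.factorial ^ (k + 1)).divisors.map Nat.castEmbedding,
    ⟨1, Finset.mem_map.2 ⟨1, by simp [N.factorial_ne_zero], Nat.cast_one⟩⟩, ?_, fun n hn => ?_⟩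
  · simp only [Finset.forall_mem_map, Nat.castEmbedding_apply]
    exact fun m hm => by exact_mod_cast Nat.pos_of_mem_divisors hm
  have hnN : n ∣ N.factorial :=
    Nat.dvd_factorial (Finset.mem_Icc.1 hn).1 (Finset.mem_Icc.1 hn).2
  rw [Finset.filter_map, Finset.card_map, Finset.card_map]
  refine le_trans ?_ hk
  gcongr
  intro m hm
  obtain ⟨hm, hnm⟩ := Finset.mem_filter.1 hm
  refine Finset.mem_sdiff.2 ⟨hm, fun hmk => hnm (Finset.mem_map.2 ⟨n * m, ?_, by simp⟩)⟩
  rw [Nat.mem_divisors, pow_succ, mul_comm n]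
  exact ⟨mul_dvd_mul (Nat.dvd_of_mem_divisors hmk) hnN, by simp [N.factorial_ne_zero]⟩

lemma exists_sum_mul_card_filter_mul_notMem_le {f : ℕ → ℝ} (hf : Summable f) (hf0 : ∀ n, 0 ≤ f n)
    {δ : ℝ} (hδ : 0 < δ) :
    ∃ S : Finset ℚ, S.Nonempty ∧ (∀ q ∈ S, 0 < q) ∧ ∀ M,
      ∑ n ∈ Finset.Icc 1 M, f n * ({q ∈ S | (n : ℚ) * q ∉ S}.card : ℝ) ≤ δ * S.card := by
  obtain ⟨N, hN⟩ := exists_sum_Ioc_le hf (half_pos hδ)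
  have hZ : 0 ≤ ∑' n, f n := tsum_nonneg hf0
  obtain ⟨S, hS, hS0, hSN⟩ :=
    exists_card_filter_mul_notMem_le N (ε := δ / 2 / (1 + ∑' n, f n)) (by positivity)
  refine ⟨S, hS, hS0, fun M => ?_⟩
  have hsub : Finset.Icc 1 M ⊆ Finset.Icc 1 N ∪ Finset.Ioc N M := fun n hn => by
    simp only [Finset.mem_union, Finset.mem_Icc, Finset.mem_Ioc] at hn ⊢
    lia
  have hdisj : Disjoint (Finset.Icc 1 N) (Finset.Ioc N M) := Finset.disjoint_left.2 fun n hn hn' =>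
    (Finset.mem_Icc.1 hn).2.not_gt (Finset.mem_Ioc.1 hn').1
  calc ∑ n ∈ Finset.Icc 1 M, f n * ({q ∈ S | (n : ℚ) * q ∉ S}.card : ℝ)
      ≤ ∑ n ∈ Finset.Icc 1 N ∪ Finset.Ioc N M, f n * ({q ∈ S | (n : ℚ) * q ∉ S}.card : ℝ) :=
        Finset.sum_le_sum_of_subset_of_nonneg hsub fun n _ _ =>
          mul_nonneg (hf0 n) (Nat.cast_nonneg _)
    _ ≤ ∑ n ∈ Finset.Icc 1 N, f n * (δ / 2 / (1 + ∑' n, f n) * S.card) +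
          ∑ n ∈ Finset.Ioc N M, f n * S.card := by
        rw [Finset.sum_union hdisj]
        refine add_le_add (Finset.sum_le_sum fun n hn => ?_) (Finset.sum_le_sum fun n _ => ?_)
        · exact mul_le_mul_of_nonneg_left (hSN n hn) (hf0 n)
        · exact mul_le_mul_of_nonneg_left (by exact_mod_cast Finset.card_filter_le _ _) (hf0 n)
    _ ≤ (1 + ∑' n, f n) * (δ / 2 / (1 + ∑' n, f n) * S.card) + δ / 2 * S.card := by
        rw [← Finset.sum_mul, ← Finset.sum_mul]
        gcongr
        · exact (hf.sum_le_tsum _ fun n _ => hf0 n).trans (le_add_of_nonneg_left zero_le_one)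
        · exact hN N le_rfl M
    _ = δ * S.card := by field_simp; ring

end Folner

section FolnerWeight

variable {S R : Finset ℚ} {n M : ℕ}

/-- The value at `q` of the difference of the indicator functions of `S` and of its translate
`n⁻¹ • S`; it is supported on the multiplicative boundary of `S`. -/
def boundaryCoeff (S : Finset ℚ) (n : ℕ) (q : ℚ) : ℝ :=
  (if q ∈ S then 1 else 0) - if (n : ℚ) * q ∈ S then 1 else 0

lemma sum_ite_natCast_mul_mem {α : Type*} [AddCommMonoid α] (hn : n ≠ 0)
    (hR : ∀ q ∈ S, q / n ∈ R) (h : ℚ → α) :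
    (∑ q ∈ R, if (n : ℚ) * q ∈ S then h q else 0) = ∑ q ∈ S, h (q / n) := by
  have hn0 : (n : ℚ) ≠ 0 := by exact_mod_cast hn
  rw [← Finset.sum_filter]
  refine Finset.sum_nbij' (fun q => (n : ℚ) * q) (fun q => q / n) (fun q hq => ?_) (fun q hq => ?_)
    (fun q _ => mul_div_cancel_left₀ q hn0) (fun q _ => mul_div_cancel₀ q hn0)
    fun q _ => by rw [mul_div_cancel_left₀ q hn0]
  · exact (Finset.mem_filter.1 hq).2
  · exact Finset.mem_filter.2 ⟨hR q hq, by rwa [mul_div_cancel₀ q hn0]⟩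

lemma sum_ite_mem_of_subset {α : Type*} [AddCommMonoid α] (hSR : S ⊆ R) (h : ℚ → α) :
    (∑ q ∈ R, if q ∈ S then h q else 0) = ∑ q ∈ S, h q := by
  rw [Finset.sum_ite_mem, Finset.inter_eq_right.2 hSR]

lemma sum_boundaryCoeff_mul (hn : n ≠ 0) (hSR : S ⊆ R) (hR : ∀ q ∈ S, q / n ∈ R) (h : ℚ → ℂ) :
    ∑ q ∈ R, boundaryCoeff S n q * h q = ∑ q ∈ S, h q - ∑ q ∈ S, h (q / n) := by
  rw [← sum_ite_mem_of_subset hSR, ← sum_ite_natCast_mul_mem hn hR, ← Finset.sum_sub_distrib]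
  refine Finset.sum_congr rfl fun q _ => ?_
  rw [boundaryCoeff]
  split_ifs <;> simp

lemma sum_boundaryCoeff_sq (hn : n ≠ 0) (hSR : S ⊆ R) (hR : ∀ q ∈ S, q / n ∈ R) :
    ∑ q ∈ R, boundaryCoeff S n q ^ 2 = 2 * ({q ∈ S | (n : ℚ) * q ∉ S}.card : ℝ) := by
  have hsq (q : ℚ) : boundaryCoeff S n q ^ 2 = (if q ∈ S then 1 else 0) +
      (if (n : ℚ) * q ∈ S then 1 else 0) -
        2 * if q ∈ S then if (n : ℚ) * q ∈ S then 1 else 0 else 0 := by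
    rw [boundaryCoeff]
    split_ifs <;> norm_num
  have hcard : ({q ∈ S | (n : ℚ) * q ∈ S}.card : ℝ) + {q ∈ S | (n : ℚ) * q ∉ S}.card = S.card := by
    exact_mod_cast Finset.card_filter_add_card_filter_not fun q => (n : ℚ) * q ∈ S
  simp only [hsq, Finset.sum_sub_distrib, Finset.sum_add_distrib, ← Finset.mul_sum,
    sum_ite_mem_of_subset hSR, sum_ite_natCast_mul_mem hn hR, Finset.sum_boole, Finset.sum_const,
    nsmul_eq_mul, mul_one]
  linarith

lemma abs_boundaryCoeff_le_one (S : Finset ℚ) (n : ℕ) (q : ℚ) : |boundaryCoeff S n q| ≤ 1 := by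
  rw [boundaryCoeff]
  split_ifs <;> norm_num

lemma natCast_cpow_neg_add_mul_I (hn : n ≠ 0) (z : ℂ) (y : ℝ) :
    (n : ℂ) ^ (-(z + y * I)) = (n : ℂ) ^ (-z) * cexp ((-Real.log n * y : ℝ) * I) := by
  have hn0 : (n : ℂ) ≠ 0 := by exact_mod_cast hn
  rw [neg_add, cpow_add _ _ hn0, cpow_def_of_ne_zero hn0 (-(y * I)), ← natCast_log]
  congr 2
  push_cast
  ring

/-- The character sum `∑ q ∈ S, q ^ (i β t)`. -/
noncomputable def ratCharSum (β : ℝ) (S : Finset ℚ) : ℝ → ℂ :=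
  trigSum S 1 fun q => β * Real.log q

/-- The coefficients of `ratCharSum (d - 1) S t * (ζ_M (z + i t) - ζ_M (z + i d t))`, where `ζ_M` is
`zetaPartialSum M`, as a trigonometric sum in `t` with frequencies `twistedFreq (d - 1)`. -/
noncomputable def twistedCoeff (S : Finset ℚ) (z : ℂ) (j : ℕ × ℚ) : ℂ :=
  (j.1 : ℂ) ^ (-z) * boundaryCoeff S j.1 j.2

/-- The frequency of the character `n ^ (-i t) * q ^ (i β t)` attached to `(n, q)`. -/
noncomputable def twistedFreq (β : ℝ) (j : ℕ × ℚ) : ℝ := -Real.log j.1 + β * Real.log j.2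

lemma cexp_mul_ratCharSum_sub (β : ℝ) (hn : n ≠ 0) (hS : ∀ q ∈ S, 0 < q) (hSR : S ⊆ R)
    (hR : ∀ q ∈ S, q / n ∈ R) (t : ℝ) :
    ratCharSum β S t * (cexp ((-Real.log n * t : ℝ) * I) -
        cexp ((-Real.log n * ((1 + β) * t) : ℝ) * I)) =
      ∑ q ∈ R, boundaryCoeff S n q * cexp ((twistedFreq β (n, q) * t : ℝ) * I) := by
  rw [sum_boundaryCoeff_mul hn hSR hR, ratCharSum, trigSum, mul_sub, Finset.sum_mul, Finset.sum_mul]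
  congr 1 <;> refine Finset.sum_congr rfl fun q hq => ?_ <;>
    rw [Pi.one_apply, one_mul, ← Complex.exp_add, ← add_mul, ← ofReal_add] <;> congr 3
  · simp only [twistedFreq]
    ring
  · have hn0 : (n : ℝ) ≠ 0 := by exact_mod_cast hn
    have hq0 : (q : ℝ) ≠ 0 := by exact_mod_cast (hS q hq).ne'
    simp only [twistedFreq, Rat.cast_div, Rat.cast_natCast, Real.log_div hq0 hn0]
    ring

lemma ratCharSum_mul_zetaPartialSum_sub (d : ℝ) (hS : ∀ q ∈ S, 0 < q) (hSR : S ⊆ R)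
    (hR : ∀ n ∈ Finset.Icc 1 M, ∀ q ∈ S, q / n ∈ R) (z : ℂ) (t : ℝ) :
    ratCharSum (d - 1) S t *
        (zetaPartialSum M (z + t * I) - zetaPartialSum M (z + (d * t : ℝ) * I)) =
      trigSum (Finset.Icc 1 M ×ˢ R) (twistedCoeff S z) (twistedFreq (d - 1)) t := by
  rw [trigSum, Finset.sum_product, zetaPartialSum, zetaPartialSum, ← Finset.sum_sub_distrib,
    Finset.mul_sum]
  refine Finset.sum_congr rfl fun n hn => ?_
  have hn0 : n ≠ 0 := Nat.one_le_iff_ne_zero.1 (Finset.mem_Icc.1 hn).1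
  have hchar := cexp_mul_ratCharSum_sub (d - 1) hn0 hS hSR (hR n hn) t
  rw [add_sub_cancel] at hchar
  simp only [twistedCoeff, mul_assoc]
  rw [natCast_cpow_neg_add_mul_I hn0, natCast_cpow_neg_add_mul_I hn0, ← mul_sub, mul_left_comm,
    hchar, Finset.mul_sum]

lemma injOn_twistedFreq {β : ℝ}
    (hβ : ∀ p q : ℚ, 0 < p → 0 < q → β * Real.log p = Real.log q → p = 1) :
    Set.InjOn (twistedFreq β) {j | 0 < j.1 ∧ 0 < j.2} := by
  rintro ⟨n, p⟩ ⟨hn, hp⟩ ⟨m, q⟩ ⟨hm, hq⟩ h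
  have hn' : (0 : ℝ) < n := by exact_mod_cast hn
  have hm' : (0 : ℝ) < m := by exact_mod_cast hm
  have hp' : (0 : ℝ) < p := by exact_mod_cast hp
  have hq' : (0 : ℝ) < q := by exact_mod_cast hq
  simp only [twistedFreq] at h hn hm hp hq
  have hpq : p / q = 1 := hβ (p / q) (n / m) (by positivity) (by positivity) (by
    push_cast
    rw [Real.log_div hp'.ne' hq'.ne', Real.log_div hn'.ne' hm'.ne']
    linarith)
  obtain rfl : p = q := (div_eq_one_iff_eq hq.ne').1 hpq
  have hlog : Real.log n = Real.log m := by linarith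
  rw [Nat.cast_injective (R := ℝ) (Real.log_injOn_pos hn' hm' hlog)]

/-- The Fejér-type weight `|∑ q ∈ S, q ^ (i β t)|² / #S`. Its mean value is `1`. For a Følner set
`S` of the multiplicative group `ℚ_{>0}`, the sum hardly changes in mean square when it is
multiplied by `n ^ (i β t)`. -/
noncomputable def folnerWeight (β : ℝ) (S : Finset ℚ) (t : ℝ) : ℝ :=
  ‖ratCharSum β S t‖ ^ 2 / S.card

@[fun_prop]
lemma continuous_folnerWeight (β : ℝ) (S : Finset ℚ) : Continuous (folnerWeight β S) := by
  unfold folnerWeight ratCharSum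
  fun_prop

lemma folnerWeight_nonneg (β : ℝ) (S : Finset ℚ) (t : ℝ) : 0 ≤ folnerWeight β S t := by
  unfold folnerWeight
  positivity

lemma folnerWeight_le_card (β : ℝ) (S : Finset ℚ) (t : ℝ) : folnerWeight β S t ≤ S.card := by
  have hnorm : ‖ratCharSum β S t‖ ≤ S.card := by
    refine (norm_sum_le _ _).trans_eq ?_
    simp only [norm_mul, norm_exp_ofReal_mul_I]
    simp
  refine div_le_of_le_mul₀ (Nat.cast_nonneg _) (Nat.cast_nonneg _) ?_
  rw [← sq]
  gcongr

lemma half_le_integral_folnerWeight {β : ℝ}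
    (hβ : ∀ p q : ℚ, 0 < p → 0 < q → β * Real.log p = Real.log q → p = 1)
    (hS : S.Nonempty) (hS0 : ∀ q ∈ S, 0 < q) :
    ∀ᶠ T : ℝ in atTop, T / 2 ≤ ∫ t in 0..T, folnerWeight β S t := by
  have hinj : Set.InjOn (fun q : ℚ => β * Real.log q) S := fun p hp q hq h => congrArg Prod.snd
    (@injOn_twistedFreq β hβ (1, p) ⟨one_pos, hS0 p hp⟩ (1, q) ⟨one_pos, hS0 q hq⟩
      (congrArg (-Real.log (1 : ℕ) + ·) h))
  have hcard : (1 : ℝ) ≤ S.card := by exact_mod_cast hS.card_pos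
  filter_upwards [eventually_abs_integral_norm_trigSum_sq_sub_le hinj one_half_pos,
    eventually_ge_atTop 0] with T hT hT0
  have hmean := (abs_le.1 (hT 1 (by simp))).1
  simp only [folnerWeight, ratCharSum, intervalIntegral.integral_div]
  rw [le_div_iff₀ (by linarith)]
  simp only [Pi.one_apply, norm_one, one_pow, Finset.sum_const, nsmul_eq_mul, mul_one] at hmean
  nlinarith

lemma norm_natCast_cpow_neg_le {a : ℝ} {z : ℂ} (hn : n ≠ 0) (hz : a ≤ z.re) :
    ‖(n : ℂ) ^ (-z)‖ ≤ (n : ℝ) ^ (-a) := by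
  rw [norm_natCast_cpow_of_pos (Nat.pos_of_ne_zero hn)]
  exact Real.rpow_le_rpow_of_exponent_le (by exact_mod_cast Nat.one_le_iff_ne_zero.2 hn)
    (by simpa using hz)

lemma norm_twistedCoeff_le_one {j : ℕ × ℚ} {z : ℂ} (hj : j.1 ≠ 0) (hz : 0 ≤ z.re) :
    ‖twistedCoeff S z j‖ ≤ 1 := by
  rw [twistedCoeff, norm_mul, norm_real]
  refine mul_le_one₀ ?_ (norm_nonneg _) (abs_boundaryCoeff_le_one _ _ _)
  simpa using norm_natCast_cpow_neg_le hj hz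

lemma sum_norm_twistedCoeff_sq_le {a : ℝ} {z : ℂ} (hSR : S ⊆ R)
    (hR : ∀ n ∈ Finset.Icc 1 M, ∀ q ∈ S, q / n ∈ R) (hz : a ≤ z.re) :
    ∑ j ∈ Finset.Icc 1 M ×ˢ R, ‖twistedCoeff S z j‖ ^ 2 ≤
      2 * ∑ n ∈ Finset.Icc 1 M,
        (n : ℝ) ^ (-(2 * a)) * ({q ∈ S | (n : ℚ) * q ∉ S}.card : ℝ) := by
  rw [Finset.sum_product, Finset.mul_sum]
  refine Finset.sum_le_sum fun n hn => ?_
  have hn0 : n ≠ 0 := Nat.one_le_iff_ne_zero.1 (Finset.mem_Icc.1 hn).1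
  calc ∑ q ∈ R, ‖twistedCoeff S z (n, q)‖ ^ 2
      = ‖(n : ℂ) ^ (-z)‖ ^ 2 * ∑ q ∈ R, boundaryCoeff S n q ^ 2 := by
        simp only [twistedCoeff, norm_mul, mul_pow, norm_real, Real.norm_eq_abs, sq_abs,
          Finset.mul_sum]
    _ ≤ ((n : ℝ) ^ (-a)) ^ 2 * (2 * ({q ∈ S | (n : ℚ) * q ∉ S}.card : ℝ)) := by
        rw [sum_boundaryCoeff_sq hn0 hSR (hR n hn)]
        gcongr
        exact norm_natCast_cpow_neg_le hn0 hz
    _ = 2 * ((n : ℝ) ^ (-(2 * a)) * ({q ∈ S | (n : ℚ) * q ∉ S}.card : ℝ)) := by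
        rw [← Real.rpow_mul_natCast n.cast_nonneg]
        push_cast
        ring_nf

lemma exists_finset_rat_subset_div_mem (hS : ∀ q ∈ S, 0 < q) (M : ℕ) : ∃ R : Finset ℚ, S ⊆ R ∧
    (∀ q ∈ R, 0 < q) ∧ ∀ n ∈ Finset.Icc 1 M, ∀ q ∈ S, q / n ∈ R := by
  refine ⟨S ∪ Finset.image₂ (fun (n : ℕ) q => q / (n : ℚ)) (Finset.Icc 1 M) S,
    Finset.subset_union_left, fun q hq => ?_,
    fun n hn q hq => Finset.mem_union_right _ (Finset.mem_image₂_of_mem hn hq)⟩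
  rcases Finset.mem_union.1 hq with hq | hq
  · exact hS q hq
  · obtain ⟨n, hn, p, hp, rfl⟩ := Finset.mem_image₂.1 hq
    have := hS p hp
    have : (0 : ℚ) < n := by exact_mod_cast (Finset.mem_Icc.1 hn).1
    positivity

lemma eventually_integral_folnerWeight_mul_le {d : ℝ}
    (hd : ∀ p q : ℚ, 0 < p → 0 < q → (d - 1) * Real.log p = Real.log q → p = 1)
    (hS : S.Nonempty) (hS0 : ∀ q ∈ S, 0 < q) {a δ : ℝ} (ha : 0 ≤ a) (hδ : 0 < δ)
    (hSM : ∑ n ∈ Finset.Icc 1 M,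
      (n : ℝ) ^ (-(2 * a)) * ({q ∈ S | (n : ℚ) * q ∉ S}.card : ℝ) ≤ δ / 4 * S.card) :
    ∀ᶠ T : ℝ in atTop, ∀ z : ℂ, a ≤ z.re → ∫ t in 0..T, folnerWeight (d - 1) S t *
      ‖zetaPartialSum M (z + t * I) - zetaPartialSum M (z + (d * t : ℝ) * I)‖ ^ 2 ≤ δ * T := by
  obtain ⟨R, hSR, hR0, hR⟩ := exists_finset_rat_subset_div_mem hS0 M
  have hpos {j : ℕ × ℚ} (hj : j ∈ Finset.Icc 1 M ×ˢ R) : 0 < j.1 ∧ 0 < j.2 :=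
    ⟨(Finset.mem_Icc.1 (Finset.mem_product.1 hj).1).1, hR0 _ (Finset.mem_product.1 hj).2⟩
  have hinj : Set.InjOn (twistedFreq (d - 1)) ↑(Finset.Icc 1 M ×ˢ R) :=
    (injOn_twistedFreq hd).mono fun j hj => hpos hj
  have hcard : (1 : ℝ) ≤ S.card := by exact_mod_cast hS.card_pos
  filter_upwards [eventually_abs_integral_norm_trigSum_sq_sub_le hinj (half_pos hδ),
    eventually_ge_atTop 0] with T hT hT0 z hz
  have hmean := (abs_le.1 (hT (twistedCoeff S z) fun j hj =>
    norm_twistedCoeff_le_one (hpos hj).1.ne' (ha.trans hz))).2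
  have hcoeff := (sum_norm_twistedCoeff_sq_le hSR hR hz).trans
    (mul_le_mul_of_nonneg_left hSM two_pos.le)
  simp only [folnerWeight, div_mul_eq_mul_div, ← mul_pow, ← norm_mul,
    ratCharSum_mul_zetaPartialSum_sub d hS0 hSR hR, intervalIntegral.integral_div]
  rw [div_le_iff₀ (by linarith)]
  calc ∫ t in 0..T, ‖trigSum _ (twistedCoeff S z) (twistedFreq (d - 1)) t‖ ^ 2
      ≤ T * (2 * (δ / 4 * S.card)) + δ / 2 * T * 1 := by
        linarith [mul_le_mul_of_nonneg_left hcoeff hT0]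
    _ ≤ T * (2 * (δ / 4 * S.card)) + δ / 2 * T * S.card := by gcongr
    _ = δ * T * S.card := by ring

end FolnerWeight

section CircleAverage

variable {E : Type*} [NormedAddCommGroup E] [NormedSpace ℂ E]

lemma norm_le_two_mul_circleAverage_norm [CompleteSpace E] {f : ℂ → E} {c s : ℂ} {r : ℝ}
    (hf : DiffContOnCl ℂ f (Metric.ball c (2 * r))) (hs : s ∈ Metric.ball c r) :
    ‖f s‖ ≤ 2 * Real.circleAverage (fun z => ‖f z‖) c (2 * r) := by
  have hr : 0 < r := Metric.pos_of_mem_ball hs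
  have habs : |2 * r| = 2 * r := abs_of_pos (by positivity)
  have hker (θ : ℝ) :
      ‖(circleMap c (2 * r) θ - c) / (circleMap c (2 * r) θ - s)‖ ≤ 2 := by
    have hnum : ‖circleMap c (2 * r) θ - c‖ = 2 * r := by
      rw [circleMap_sub_center, norm_circleMap_zero, habs]
    have hsc : ‖s - c‖ < r := by rwa [← dist_eq_norm]
    have htri := norm_sub_le_norm_sub_add_norm_sub (circleMap c (2 * r) θ) s c
    rw [norm_div, hnum, div_le_iff₀ (by linarith)]
    linarith
  have hcont : Continuous fun θ => f (circleMap c (2 * r) θ) := by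
    refine hf.continuousOn.comp_continuous (continuous_circleMap _ _) fun θ => ?_
    rw [closure_ball _ (by positivity)]
    exact circleMap_mem_closedBall _ (by positivity) _
  have hmean := DiffContOnCl.circleAverage_smul_div (c := c) (R := 2 * r) (by rwa [habs])
    (by rw [habs]; exact Metric.ball_subset_ball (by linarith) hs)
  rw [← hmean, Real.circleAverage_def, Real.circleAverage_def, norm_smul, smul_eq_mul,
    mul_left_comm, Real.norm_of_nonneg (by positivity), ← intervalIntegral.integral_const_mul]
  refine mul_le_mul_of_nonneg_left (intervalIntegral.norm_integral_le_of_norm_le (by positivity)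
    (ae_of_all _ fun θ _ => ?_) ((hcont.norm.const_mul 2).intervalIntegrable _ _)) (by positivity)
  rw [norm_smul]
  exact mul_le_mul_of_nonneg_right (hker θ) (norm_nonneg _)

lemma continuous_circleAverage {X : Type*} [TopologicalSpace X]
    {F : X → ℂ → ℝ} {c : ℂ} {R : ℝ}
    (hF : Continuous fun x : X × ℝ => F x.1 (circleMap c R x.2)) :
    Continuous fun x => Real.circleAverage (F x) c R :=
  (intervalIntegral.continuous_parametric_intervalIntegral_of_continuous'
    (f := fun x θ => F x (circleMap c R θ)) hF 0 (2 * Real.pi)).const_smul (2 * Real.pi)⁻¹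

lemma integral_circleAverage_comm {F : ℝ → ℂ → ℝ} {c : ℂ} {R : ℝ}
    (hF : Continuous fun x : ℝ × ℝ => F x.1 (circleMap c R x.2)) (a b : ℝ) :
    ∫ t in a..b, Real.circleAverage (F t) c R =
      Real.circleAverage (fun z => ∫ t in a..b, F t z) c R := by
  simp only [Real.circleAverage_def, smul_eq_mul, intervalIntegral.integral_const_mul]
  rw [intervalIntegral_intervalIntegral_swap]
  exact (hF.continuousOn.integrableOn_compact (isCompact_uIcc.prod isCompact_uIcc)).mono_set
    (Set.prod_mono Set.uIoc_subset_uIcc Set.uIoc_subset_uIcc)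

lemma integral_mul_circleAverage_le {W : ℝ → ℝ} {F : ℝ → ℂ → ℝ} {c : ℂ} {R a b C : ℝ}
    (hW : Continuous W) (hF : Continuous fun x : ℝ × ℝ => F x.1 (circleMap c R x.2))
    (hC : ∀ z ∈ Metric.sphere c |R|, ∫ t in a..b, W t * F t z ≤ C) :
    ∫ t in a..b, W t * Real.circleAverage (F t) c R ≤ C := by
  have hWF : Continuous fun x : ℝ × ℝ => W x.1 * F x.1 (circleMap c R x.2) :=
    (hW.comp continuous_fst).mul hF
  simp only [← smul_eq_mul, ← Real.circleAverage_fun_smul]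
  rw [integral_circleAverage_comm hWF]
  exact Real.circleAverage_mono_on_of_le_circle (Continuous.intervalIntegrable
    (intervalIntegral.continuous_parametric_intervalIntegral_of_continuous'
      (f := fun θ t => W t * F t (circleMap c R θ)) (hWF.comp continuous_swap) _ _) _ _) hC

/-- The total energy `∑ c ∈ t, ⨍ |f|²` of `f` on the circles of radius `2 r` about the points of
`t`. It controls `|f|²` uniformly on the balls of radius `r` about these points. -/
noncomputable def circleEnergy (t : Finset ℂ) (r : ℝ) (f : ℂ → ℂ) : ℝ :=
  ∑ c ∈ t, Real.circleAverage (fun z => ‖f z‖ ^ 2) c (2 * r)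

lemma circleAverage_norm_sq_nonneg (f : ℂ → ℂ) (c : ℂ) (R : ℝ) :
    0 ≤ Real.circleAverage (fun z => ‖f z‖ ^ 2) c R :=
  Real.circleAverage_nonneg_of_nonneg fun _ _ => sq_nonneg _

lemma circleEnergy_nonneg (t : Finset ℂ) (r : ℝ) (f : ℂ → ℂ) : 0 ≤ circleEnergy t r f :=
  Finset.sum_nonneg fun c _ => circleAverage_norm_sq_nonneg f c _

lemma norm_sq_le_two_mul_circleEnergy {t : Finset ℂ} {r : ℝ} {f : ℂ → ℂ} {c s : ℂ}
    (hf : DiffContOnCl ℂ f (Metric.ball c (2 * r))) (hc : c ∈ t) (hs : s ∈ Metric.ball c r) :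
    ‖f s‖ ^ 2 ≤ 2 * circleEnergy t r f := by
  have hsq : DiffContOnCl ℂ (fun z => f z ^ 2) (Metric.ball c (2 * r)) :=
    ⟨hf.1.pow 2, hf.2.pow 2⟩
  have hcauchy := norm_le_two_mul_circleAverage_norm hsq hs
  simp only [norm_pow] at hcauchy
  refine hcauchy.trans (mul_le_mul_of_nonneg_left ?_ two_pos.le)
  exact Finset.single_le_sum (f := fun c => Real.circleAverage (fun z => ‖f z‖ ^ 2) c (2 * r))
    (fun c _ => circleAverage_norm_sq_nonneg f c _) hc

variable {t : Finset ℂ} {r : ℝ}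

lemma continuous_circleEnergy {X : Type*} [TopologicalSpace X] {F : X → ℂ → ℂ}
    (hF : ∀ c ∈ t, Continuous fun x : X × ℝ => F x.1 (circleMap c (2 * r) x.2)) :
    Continuous fun x => circleEnergy t r (F x) :=
  continuous_finsetSum _ fun c hc =>
    continuous_circleAverage (F := fun x z => ‖F x z‖ ^ 2) ((hF c hc).norm.pow 2)

lemma integral_mul_circleEnergy_le {W : ℝ → ℝ} {F : ℝ → ℂ → ℂ} {a b C : ℝ} (hW : Continuous W)
    (hF : ∀ c ∈ t, Continuous fun x : ℝ × ℝ => F x.1 (circleMap c (2 * r) x.2))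
    (hC : ∀ c ∈ t, ∀ z ∈ Metric.sphere c |2 * r|, ∫ τ in a..b, W τ * ‖F τ z‖ ^ 2 ≤ C) :
    ∫ τ in a..b, W τ * circleEnergy t r (F τ) ≤ t.card * C := by
  have hF2 (c) (hc : c ∈ t) : Continuous fun x : ℝ × ℝ => ‖F x.1 (circleMap c (2 * r) x.2)‖ ^ 2 :=
    (hF c hc).norm.pow 2
  simp only [circleEnergy, Finset.mul_sum]
  have hint (c) (hc : c ∈ t) : IntervalIntegrable
      (fun τ => W τ * Real.circleAverage (fun z => ‖F τ z‖ ^ 2) c (2 * r)) volume a b :=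
    (hW.mul (continuous_circleAverage (F := fun τ z => ‖F τ z‖ ^ 2) (hF2 c hc))).intervalIntegrable
      _ _
  rw [intervalIntegral.integral_finsetSum hint, ← nsmul_eq_mul]
  exact Finset.sum_le_card_nsmul _ _ _ fun c hc =>
    integral_mul_circleAverage_le (F := fun τ z => ‖F τ z‖ ^ 2) hW (hF2 c hc) (hC c hc)

end CircleAverage

section LowerDensity

lemma integral_le_integral_mul_add_mul_measureReal {α : Type*} [MeasurableSpace α] {μ : Measure α}
    [IsFiniteMeasure μ] {W J : α → ℝ} {B e : ℝ} (hW : Integrable W μ)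
    (hWJ : Integrable (fun x => W x * J x) μ) (hJ : Measurable J) (hW0 : ∀ x, 0 ≤ W x)
    (hWB : ∀ x, W x ≤ B) (hJ0 : ∀ x, 0 ≤ J x) :
    e * ∫ x, W x ∂μ ≤ ∫ x, W x * J x ∂μ + e * B * μ.real {x | J x < e} := by
  have hmeas : MeasurableSet {x | J x < e} := measurableSet_lt hJ measurable_const
  have hind : Integrable ({x | J x < e}.indicator fun _ => e * B) μ :=
    (integrable_const _).indicator hmeas
  rw [← integral_const_mul, mul_comm (e * B), ← smul_eq_mul, ← integral_indicator_const _ hmeas,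
    ← integral_add hWJ hind]
  refine integral_mono (hW.const_mul e) (hWJ.add hind) fun x => ?_
  have hWJ0 := mul_nonneg (hW0 x) (hJ0 x)
  by_cases hx : J x < e
  · simp only [Set.indicator_of_mem (show x ∈ {x | J x < e} from hx)]
    have := mul_le_mul_of_nonneg_left (hWB x) ((hJ0 x).trans hx.le)
    linarith
  · simp only [Set.indicator_of_notMem (show x ∉ {x | J x < e} from hx), add_zero]
    rw [mul_comm]
    exact mul_le_mul_of_nonneg_left (not_lt.1 hx) (hW0 x)

lemma volume_inter_Icc_zero_toReal_le (S : Set ℝ) {T : ℝ} (hT : 0 ≤ T) :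
    (volume (S ∩ Set.Icc 0 T)).toReal ≤ T := by
  refine ENNReal.toReal_le_of_le_ofReal hT ((measure_mono Set.inter_subset_right).trans_eq ?_)
  rw [Real.volume_Icc, sub_zero]

lemma lowerDens_pos_of_eventually_le {S : Set ℝ} {κ : ℝ} (hκ : 0 < κ)
    (hS : ∀ᶠ T : ℝ in atTop, κ * T ≤ (volume (S ∩ Set.Icc 0 T)).toReal) : 0 < lowerDens S := by
  refine hκ.trans_le (le_liminf_of_le (IsBoundedUnder.isCoboundedUnder_ge ⟨1, ?_⟩) ?_)
  · rw [eventually_map]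
    filter_upwards [eventually_gt_atTop 0] with T hT
    exact (div_le_one hT).2 (volume_inter_Icc_zero_toReal_le S hT.le)
  · filter_upwards [eventually_gt_atTop 0, hS] with T hT hST
    rwa [le_div_iff₀ hT]

lemma lowerDens_pos_of_integral_mul_le {S : Set ℝ} {W J : ℝ → ℝ} {B e : ℝ} (hW : Continuous W)
    (hW0 : ∀ t, 0 ≤ W t) (hB : 0 < B) (hWB : ∀ t, W t ≤ B) (hJ : Continuous J)
    (hJ0 : ∀ t, 0 ≤ J t) (he : 0 < e) (hS : {t | J t < e} ⊆ S)
    (hmean : ∀ᶠ T : ℝ in atTop, T / 2 ≤ ∫ t in 0..T, W t)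
    (hWJ : ∀ᶠ T : ℝ in atTop, ∫ t in 0..T, W t * J t ≤ e / 4 * T) : 0 < lowerDens S := by
  refine lowerDens_pos_of_eventually_le (κ := 1 / (4 * B)) (by positivity) ?_
  filter_upwards [hmean, hWJ, eventually_ge_atTop 0] with T hT hTJ hT0
  rw [intervalIntegral.integral_of_le hT0] at hT hTJ
  have hmeas : MeasurableSet {t | J t < e} := measurableSet_lt hJ.measurable measurable_const
  have hkey := integral_le_integral_mul_add_mul_measureReal (μ := volume.restrict (Set.Ioc 0 T))
    (e := e) hW.integrableOn_Ioc (hW.mul hJ).integrableOn_Ioc hJ.measurable hW0 hWB hJ0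
  have hsub : (volume.restrict (Set.Ioc 0 T)).real {t | J t < e} ≤
      (volume (S ∩ Set.Icc 0 T)).toReal := by
    rw [measureReal_restrict_apply hmeas]
    exact measureReal_mono (Set.inter_subset_inter hS Set.Ioc_subset_Icc_self)
      (measure_ne_top_of_subset Set.inter_subset_right measure_Icc_lt_top.ne)
  have hlow : e * (T / 4) ≤ e * (B * (volume (S ∩ Set.Icc 0 T)).toReal) := by
    have := mul_le_mul_of_nonneg_left hT he.le
    have := mul_le_mul_of_nonneg_left hsub (mul_pos he hB).le
    linarith
  have := le_of_mul_le_mul_left hlow he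
  rw [one_div, inv_mul_le_iff₀ (by positivity)]
  linarith

end LowerDensity

section ShiftDifference

/-- The difference `ζ (s + i d τ) - ζ (s + i τ)` of two vertical shifts of the zeta function, as a
function of `s` for given `d` and `τ`. -/
noncomputable def zetaShiftDiff (d τ : ℝ) (s : ℂ) : ℂ :=
  riemannZeta (s + (d * τ : ℝ) * I) - riemannZeta (s + τ * I)

lemma continuous_zetaShiftDiff_comp (d : ℝ) {X : Type*} [TopologicalSpace X] {τ : X → ℝ} {g : X → ℂ}
    (hτ : Continuous τ) (hg : Continuous g) (hg1 : ∀ x, (g x).re < 1) :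
    Continuous fun x => zetaShiftDiff d (τ x) (g x) :=
  (continuous_riemannZeta_comp (by fun_prop) fun x => by simpa using hg1 x).sub
    (continuous_riemannZeta_comp (by fun_prop) fun x => by simpa using hg1 x)

lemma differentiableOn_zetaShiftDiff (d τ : ℝ) :
    DifferentiableOn ℂ (zetaShiftDiff d τ) {s | s.re < 1} := by
  intro s hs
  have hne (y : ℝ) : s + y * I ≠ 1 := fun h => by
    exact hs.ne (by simpa using congrArg Complex.re h)
  have hshift (y : ℝ) : DifferentiableAt ℂ (fun s => riemannZeta (s + y * I)) s :=
    (differentiableAt_riemannZeta (hne y)).comp s (by fun_prop)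
  exact ((hshift (d * τ)).sub (hshift τ)).differentiableWithinAt

lemma norm_sub_sq_le_three_mul {E : Type*} [SeminormedAddCommGroup E] (p q u v : E) :
    ‖p - q‖ ^ 2 ≤ 3 * (‖p - u‖ ^ 2 + ‖q - v‖ ^ 2 + ‖v - u‖ ^ 2) := by
  have htri : ‖p - q‖ ≤ ‖p - u‖ + ‖q - v‖ + ‖v - u‖ := by
    rw [show p - q = (p - u) - (q - v) - (v - u) by abel]
    exact (norm_sub_le _ _).trans (by gcongr; exact norm_sub_le _ _)
  refine (pow_le_pow_left₀ (norm_nonneg _) htri 2).trans ?_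
  nlinarith [sq_nonneg (‖p - u‖ - ‖q - v‖), sq_nonneg (‖p - u‖ - ‖v - u‖),
    sq_nonneg (‖q - v‖ - ‖v - u‖)]

lemma integral_mul_norm_zetaShiftDiff_sq_le {W : ℝ → ℝ} {B d T : ℝ} {z : ℂ} (hW : Continuous W)
    (hW0 : ∀ t, 0 ≤ W t) (hWB : ∀ t, W t ≤ B) (hz : z.re < 1) (M : ℕ) (hT : 0 ≤ T) :
    ∫ t in 0..T, W t * ‖zetaShiftDiff d t z‖ ^ 2 ≤
      3 * (B * (∫ t in 0..T, ‖riemannZeta (z + (d * t : ℝ) * I) -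
          zetaPartialSum M (z + (d * t : ℝ) * I)‖ ^ 2) +
        B * (∫ t in 0..T, ‖riemannZeta (z + t * I) - zetaPartialSum M (z + t * I)‖ ^ 2) +
        ∫ t in 0..T, W t *
          ‖zetaPartialSum M (z + t * I) - zetaPartialSum M (z + (d * t : ℝ) * I)‖ ^ 2) := by
  have hpartial (c : ℝ) : Continuous fun t : ℝ => zetaPartialSum M (z + (c * t : ℝ) * I) :=
    (differentiable_zetaPartialSum M).continuous.comp (by fun_prop)
  have hzeta (c : ℝ) : Continuous fun t : ℝ => riemannZeta (z + (c * t : ℝ) * I) :=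
    continuous_riemannZeta_comp (by fun_prop) fun t => by simpa using hz
  have hq : Continuous fun t : ℝ => zetaPartialSum M (z + t * I) := by simpa using hpartial 1
  have hu := hzeta d
  have hv : Continuous fun t : ℝ => riemannZeta (z + t * I) := by simpa using hzeta 1
  have hint {f : ℝ → ℝ} (hf : Continuous f) : IntervalIntegrable f volume 0 T :=
    hf.intervalIntegrable _ _
  rw [← intervalIntegral.integral_const_mul, ← intervalIntegral.integral_const_mul,
    ← intervalIntegral.integral_add (hint (by fun_prop)) (hint (by fun_prop)),
    ← intervalIntegral.integral_add (hint (by fun_prop)) (hint (by fun_prop)),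
    ← intervalIntegral.integral_const_mul]
  refine intervalIntegral.integral_mono_on hT (hint (hW.mul ((hu.sub hv).norm.pow 2)))
    (hint (by fun_prop)) fun t _ => ?_
  have hpt := mul_le_mul_of_nonneg_left (norm_sub_sq_le_three_mul
    (riemannZeta (z + (d * t : ℝ) * I)) (riemannZeta (z + t * I))
    (zetaPartialSum M (z + (d * t : ℝ) * I)) (zetaPartialSum M (z + t * I))) (hW0 t)
  refine hpt.trans ?_
  rw [mul_left_comm, mul_add (W t), mul_add (W t)]
  gcongr <;> exact hWB t

lemma exists_folnerWeight_integral_mul_norm_zetaShiftDiff_sq_le {d a b δ : ℝ}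
    (hd : ∀ p q : ℚ, 0 < p → 0 < q → (d - 1) * Real.log p = Real.log q → p = 1)
    (hd0 : d ≠ 0) (ha : 1 / 2 < a) (hb : b < 1) (B : ℝ) (hδ : 0 < δ) :
    ∃ S : Finset ℚ, S.Nonempty ∧
      (∀ᶠ T : ℝ in atTop, T / 2 ≤ ∫ t in 0..T, folnerWeight (d - 1) S t) ∧
      ∀ᶠ T : ℝ in atTop, ∀ z : ℂ, z.re ∈ Set.Icc a b → |z.im| ≤ B →
        ∫ t in 0..T, folnerWeight (d - 1) S t * ‖zetaShiftDiff d t z‖ ^ 2 ≤ δ * T := by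
  obtain ⟨S, hS, hS0, hSM⟩ := exists_sum_mul_card_filter_mul_notMem_le
    (Real.summable_nat_rpow.2 (by linarith : -(2 * a) < -1)) (fun n => by positivity)
    (by positivity : 0 < δ / 9 / 4)
  have hδ' : 0 < δ / (9 * S.card) := by positivity
  obtain ⟨M₁, hM₁⟩ :=
    integral_norm_riemannZeta_sub_zetaPartialSum_sq_shift_eventually_le ha hb B hd0 hδ'
  obtain ⟨M₂, hM₂⟩ :=
    integral_norm_riemannZeta_sub_zetaPartialSum_sq_shift_eventually_le ha hb B one_ne_zero hδ'
  refine ⟨S, hS, half_le_integral_folnerWeight hd hS hS0, ?_⟩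
  filter_upwards [hM₁ _ (le_max_left M₁ M₂), hM₂ _ (le_max_right M₁ M₂),
    eventually_integral_folnerWeight_mul_le hd hS hS0 (by linarith) (by positivity : 0 < δ / 9)
      (hSM (max M₁ M₂)), eventually_ge_atTop 0] with T hdT h1T hWT hT z hz hzB
  have h1 := h1T z hz hzB
  simp only [one_mul] at h1
  calc ∫ t in 0..T, folnerWeight (d - 1) S t * ‖zetaShiftDiff d t z‖ ^ 2
      ≤ 3 * (S.card * (δ / (9 * S.card) * T) + S.card * (δ / (9 * S.card) * T) + δ / 9 * T) := by
        refine (integral_mul_norm_zetaShiftDiff_sq_le (continuous_folnerWeight _ _)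
          (folnerWeight_nonneg _ S) (folnerWeight_le_card _ S) (hz.2.trans_lt hb) (max M₁ M₂)
          hT).trans ?_
        gcongr
        exacts [hdT z hz hzB, hWT z hz.1]
    _ = δ * T := by
        field_simp
        ring

end ShiftDifference

section Rolle

lemma exists_finset_card_eq_of_le_encard {α : Type*} {s : Set α} {n : ℕ}
    (h : (n : ℕ∞) ≤ s.encard) : ∃ t : Finset α, ↑t ⊆ s ∧ t.card = n := by
  obtain ⟨t, hts, ht⟩ := Set.exists_subset_encard_eq h
  have hfin := Set.finite_of_encard_eq_coe ht
  refine ⟨hfin.toFinset, by simpa using hts, ?_⟩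
  exact_mod_cast hfin.encard_eq_coe_toFinset_card.symm.trans ht

lemma le_encard_zeros_of_hasDerivAt {f f' : ℝ → ℝ} (hf : ∀ x, HasDerivAt f (f' x) x) {n : ℕ}
    (h : ((n + 1 : ℕ) : ℕ∞) ≤ {x | f x = 0}.encard) : (n : ℕ∞) ≤ {x | f' x = 0}.encard := by
  obtain ⟨Z, hZ, hcard⟩ := exists_finset_card_eq_of_le_encard h
  set u := Z.orderEmbOfFin hcard
  have hu (i : Fin (n + 1)) : f (u i) = 0 := hZ (Z.orderEmbOfFin_mem hcard i)
  have hrolle (i : Fin n) : ∃ c ∈ Set.Ioo (u i.castSucc) (u i.succ), f' c = 0 :=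
    exists_hasDerivAt_eq_zero (u.strictMono i.castSucc_lt_succ)
      (fun x _ => (hf x).continuousAt.continuousWithinAt) (by rw [hu, hu]) fun x _ => hf x
  choose v hv hv0 using hrolle
  have hmono : StrictMono v := fun i j hij =>
    (hv i).2.trans_le ((u.monotone (Fin.succ_le_castSucc_iff.2 hij)).trans (hv j).1.le)
  calc (n : ℕ∞) = (Set.range v).encard := by
        rw [← Set.image_univ, hmono.injective.encard_image, Set.encard_univ]; simp
    _ ≤ {x | f' x = 0}.encard := Set.encard_le_encard (Set.range_subset_iff.2 hv0)

lemma le_encard_zeros_iterate_of_hasDerivAt {g : ℕ → ℝ → ℝ}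
    (hg : ∀ k x, HasDerivAt (g k) (g (k + 1) x) x) {k n : ℕ}
    (h : ((n + k : ℕ) : ℕ∞) ≤ {x | g 0 x = 0}.encard) : (n : ℕ∞) ≤ {x | g k x = 0}.encard := by
  induction k generalizing n with
  | zero => exact h
  | succ k ih => exact le_encard_zeros_of_hasDerivAt (hg k) (ih (by rwa [add_right_comm]))

end Rolle

section ExponentialPolynomial

open Polynomial

/-- The operator `P ↦ P' + cP`, which is differentiation of `P e^{cx}` seen on the coefficient
`P`. -/
noncomputable def expDerivative (c : ℝ) (P : ℝ[X]) : ℝ[X] :=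
  derivative P + C c * P

lemma expDerivative_zero : expDerivative 0 = derivative := by
  ext P
  simp [expDerivative]

lemma degree_iterate_expDerivative_le (c : ℝ) (k : ℕ) (P : ℝ[X]) :
    ((expDerivative c)^[k] P).degree ≤ P.degree := by
  induction k with
  | zero => rfl
  | succ k ih =>
    rw [Function.iterate_succ_apply']
    refine (degree_add_le _ _).trans (max_le (degree_derivative_le.trans ih) ?_)
    rw [← smul_eq_C_mul]
    exact (degree_smul_le _ _).trans ih

lemma eq_zero_of_iterate_expDerivative_eq_zero {c : ℝ} (hc : c ≠ 0) {k : ℕ} {P : ℝ[X]}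
    (h : (expDerivative c)^[k] P = 0) : P = 0 := by
  induction k with
  | zero => exact h
  | succ k ih =>
    rw [Function.iterate_succ_apply'] at h
    by_contra hP
    have hlt := degree_derivative_lt fun h0 => hP (ih h0)
    rw [eq_neg_of_add_eq_zero_left h, degree_neg, degree_C_mul hc] at hlt
    exact lt_irrefl _ hlt

lemma hasDerivAt_eval_mul_exp (c : ℝ) (P : ℝ[X]) (x : ℝ) :
    HasDerivAt (fun x => P.eval x * Real.exp (c * x))
      ((expDerivative c P).eval x * Real.exp (c * x)) x := by
  refine ((P.hasDerivAt x).mul ((hasDerivAt_id x).const_mul c).exp).congr_deriv ?_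
  simp only [expDerivative, eval_add, eval_mul, eval_C, id]
  ring

lemma le_encard_zeros_iterate_expDerivative {l : ℝ} {L N n : ℕ} {P : Fin (N + 1) → ℝ[X]}
    (hP : (P 0).degree < L)
    (h : ((n + L : ℕ) : ℕ∞) ≤
      {x | ∑ j, (P j).eval x * Real.exp ((j : ℕ) * l * x) = 0}.encard) :
    (n : ℕ∞) ≤ {x | ∑ j : Fin N, ((expDerivative ((j + 1 : ℕ) * l))^[L] (P j.succ)).eval x *
      Real.exp ((j : ℕ) * l * x) = 0}.encard := by
  have hzeros := le_encard_zeros_iterate_of_hasDerivAt (k := L) (g := fun k x =>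
    ∑ j : Fin (N + 1),
      ((expDerivative ((j : ℕ) * l))^[k] (P j)).eval x * Real.exp ((j : ℕ) * l * x))
    (fun k x => HasDerivAt.fun_sum fun j _ => by
      rw [Function.iterate_succ_apply']; exact hasDerivAt_eval_mul_exp _ _ x) h
  refine hzeros.trans (Set.encard_le_encard fun x (hx : _ = _) => ?_)
  rw [Fin.sum_univ_succ, Fin.val_zero, Nat.cast_zero, zero_mul, expDerivative_zero,
    iterate_derivative_eq_zero_of_degree_lt hP, eval_zero, zero_mul, zero_add] at hx
  refine (mul_eq_zero.1 ?_).resolve_left (Real.exp_ne_zero (l * x))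
  rw [← hx, Finset.mul_sum]
  refine Finset.sum_congr rfl fun j _ => ?_
  rw [mul_left_comm, ← Real.exp_add, Fin.val_succ]
  push_cast
  ring_nf

theorem eq_zero_of_le_encard_zeros_sum_eval_mul_exp {l : ℝ} (hl : l ≠ 0) {L N : ℕ}
    {P : Fin N → ℝ[X]} (hP : ∀ j, (P j).degree < L)
    (h : ((N * L : ℕ) : ℕ∞) ≤
      {x | ∑ j, (P j).eval x * Real.exp ((j : ℕ) * l * x) = 0}.encard) : P = 0 := by
  induction N with
  | zero => exact Subsingleton.elim _ _
  | succ N ih =>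
    have hiter := ih (fun j => (degree_iterate_expDerivative_le _ _ _).trans_lt (hP j.succ))
      (le_encard_zeros_iterate_expDerivative (hP 0) (by rwa [← Nat.succ_mul]))
    have hsucc (j : Fin N) : P j.succ = 0 :=
      eq_zero_of_iterate_expDerivative_eq_zero (mul_ne_zero (by positivity) hl)
        (congrFun hiter j)
    obtain ⟨Z, hZ, hcard⟩ := exists_finset_card_eq_of_le_encard h
    have hzero : P 0 = 0 := by
      refine eq_zero_of_degree_lt_of_eval_finset_eq_zero Z ((hP 0).trans_le ?_) fun x hx => ?_
      · exact_mod_cast hcard ▸ Nat.le_mul_of_pos_left L N.succ_pos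
      · have hx0 : _ = _ := hZ hx
        simpa [Fin.sum_univ_succ, hsucc] using hx0
    exact funext (Fin.cases hzero hsucc)

/-- The exponential polynomial `∑ ξᵢⱼ zⁱ e^{jlz}`. -/
noncomputable def expPoly {L N : ℕ} (l : ℝ) (ξ : Fin L × Fin N → ℝ) (z : ℂ) : ℂ :=
  ∑ k, (ξ k : ℂ) * z ^ (k.1 : ℕ) * Complex.exp ((k.2 : ℕ) * l * z)

variable {L N : ℕ} {l : ℝ} {ξ : Fin L × Fin N → ℝ}

lemma differentiable_expPoly : Differentiable ℂ (expPoly l ξ) := by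
  unfold expPoly
  fun_prop

lemma eq_zero_of_forall_expPoly_eq_zero (hl : l ≠ 0) {Z : Finset ℝ} (hZ : N * L ≤ Z.card)
    (h : ∀ x ∈ Z, expPoly l ξ x = 0) : ξ = 0 := by
  set P : Fin N → degreeLT ℝ L := fun j => (degreeLTEquiv ℝ L).symm fun i => ξ (i, j) with hPdef
  have hcoeff (i j) : degreeLTEquiv ℝ L (P j) i = ξ (i, j) := by simp [hPdef]
  have heval (x : ℝ) : expPoly l ξ x =
      ((∑ j, (P j : ℝ[X]).eval x * Real.exp ((j : ℕ) * l * x) : ℝ) : ℂ) := by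
    simp only [expPoly, Fintype.sum_prod_type_right, eval_eq_sum_degreeLTEquiv (P _).2,
      Subtype.coe_eta, hcoeff, Finset.sum_mul]
    push_cast
    rfl
  have hP := eq_zero_of_le_encard_zeros_sum_eval_mul_exp hl (P := fun j => (P j : ℝ[X]))
    (fun j => mem_degreeLT.1 (P j).2) <| by
      calc ((N * L : ℕ) : ℕ∞) ≤ Z.card := by exact_mod_cast hZ
        _ = (Z : Set ℝ).encard := (Set.encard_coe_eq_coe_finsetCard Z).symm
        _ ≤ _ := Set.encard_le_encard fun x hx => Complex.ofReal_eq_zero.1 (heval x ▸ h x hx)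
  funext ⟨i, j⟩
  have hPj : P j = 0 := Subtype.ext (congrFun hP j)
  rw [← hcoeff, hPj, map_zero]
  rfl

end ExponentialPolynomial

section SchwarzLemma

lemma exists_differentiable_eq_prod_sub_mul {F : ℂ → ℂ} (hF : Differentiable ℂ F) {Z : Finset ℂ}
    (hZ : ∀ z ∈ Z, F z = 0) :
    ∃ G : ℂ → ℂ, Differentiable ℂ G ∧ ∀ z, F z = (∏ w ∈ Z, (z - w)) * G z := by
  induction Z using Finset.induction_on with
  | empty => exact ⟨F, hF, by simp⟩
  | insert a Z ha ih =>
    obtain ⟨G, hG, hFG⟩ := ih fun z hz => hZ z (Finset.mem_insert_of_mem hz)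
    have hGa : G a = 0 := by
      have hFa := hZ a (Finset.mem_insert_self a Z)
      rw [hFG, mul_eq_zero, Finset.prod_eq_zero_iff] at hFa
      refine hFa.resolve_left fun ⟨w, hw, haw⟩ => ha ?_
      rwa [sub_eq_zero.1 haw]
    refine ⟨dslope G a, ?_, fun z => ?_⟩
    · rw [← differentiableOn_univ] at hG ⊢
      exact (Complex.differentiableOn_dslope Filter.univ_mem).2 hG
    · have hslope := sub_smul_dslope G a z
      rw [hGa, sub_zero, smul_eq_mul] at hslope
      rw [Finset.prod_insert ha, hFG, ← hslope]
      ring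

theorem norm_mul_two_pow_card_le {F : ℂ → ℂ} (hF : Differentiable ℂ F) {Z : Finset ℂ}
    (hZ : ∀ z ∈ Z, F z = 0) {X M : ℝ} (hX : 0 < X) (hZX : ∀ z ∈ Z, ‖z‖ ≤ X)
    (hM : ∀ z, ‖z‖ = 5 * X → ‖F z‖ ≤ M) {x : ℂ} (hx : ‖x‖ ≤ X) :
    ‖F x‖ * 2 ^ Z.card ≤ M := by
  obtain ⟨G, hG, hFG⟩ := exists_differentiable_eq_prod_sub_mul hF hZ
  have hsphere (z : ℂ) (hz : ‖z‖ = 5 * X) : ‖G z‖ ≤ M / (4 * X) ^ Z.card := by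
    have hFz := hM z hz
    rw [hFG, norm_mul, norm_prod] at hFz
    rw [le_div_iff₀' (by positivity)]
    refine le_trans ?_ hFz
    gcongr
    rw [← Finset.prod_const]
    gcongr with w hw
    linarith [norm_sub_norm_le z w, hZX w hw]
  have hGx : ‖G x‖ ≤ M / (4 * X) ^ Z.card := by
    refine Complex.norm_le_of_forall_mem_frontier_norm_le (U := Metric.ball 0 (5 * X))
      Metric.isBounded_ball hG.diffContOnCl (fun z hz => hsphere z ?_) (subset_closure ?_)
    · rwa [frontier_ball _ (by positivity), mem_sphere_zero_iff_norm] at hz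
    · rw [mem_ball_zero_iff]
      linarith
  have hprod : ∏ w ∈ Z, ‖x - w‖ ≤ (2 * X) ^ Z.card := by
    rw [← Finset.prod_const]
    gcongr with w hw
    linarith [norm_sub_le x w, hZX w hw]
  rw [hFG, norm_mul, norm_prod]
  calc (∏ w ∈ Z, ‖x - w‖) * ‖G x‖ * 2 ^ Z.card
      ≤ (2 * X) ^ Z.card * (M / (4 * X) ^ Z.card) * 2 ^ Z.card := by gcongr
    _ = M := by
      rw [show 4 * X = 2 * X * 2 by ring, mul_pow (2 * X) 2]
      field_simp

end SchwarzLemma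

section Arithmetic

open NumberField

lemma isIntegral_pow_mul_pow {R : Type*} [CommRing R] {D : ℕ} {x : R}
    (hx : IsIntegral ℤ (D * x)) {i n : ℕ} (h : i ≤ n) : IsIntegral ℤ ((D : R) ^ n * x ^ i) := by
  obtain ⟨k, rfl⟩ := Nat.exists_eq_add_of_le h
  rw [show (D : R) ^ (i + k) * x ^ i = D ^ k * (D * x) ^ i by rw [pow_add, mul_pow]; ring]
  exact ((isIntegral_natCast D).pow k).mul (hx.pow i)

variable {K : Type*} [Field K] [NumberField K]

lemma exists_natCast_mul_isIntegral (s : Finset K) :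
    ∃ D : ℕ, D ≠ 0 ∧ ∀ x ∈ s, IsIntegral ℤ ((D : K) * x) := by
  obtain ⟨y, hy0, hy⟩ := exists_integral_multiples ℤ ℚ s
  refine ⟨y.natAbs, Int.natAbs_ne_zero.2 hy0, fun x hx => ?_⟩
  have hyx := hy x hx
  rw [zsmul_eq_mul] at hyx
  obtain habs | habs := Int.natAbs_eq y
  · rw [habs] at hyx
    simpa using hyx
  · rw [habs] at hyx
    simpa using hyx.neg

lemma house_pow_le_pow {x : K} {Y : ℝ} (hx : house x ≤ Y) (hY : 1 ≤ Y) {i n : ℕ} (h : i ≤ n) :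
    house (x ^ i) ≤ Y ^ n :=
  (house_pow_le x i).trans <| (pow_le_pow_left₀ (house_nonneg x) hx i).trans <|
    pow_le_pow_right₀ hY h

lemma house_mul_le_mul {x y : K} {A B : ℝ} (hx : house x ≤ A) (hy : house y ≤ B) :
    house (x * y) ≤ A * B :=
  (house_mul_le x y).trans <|
    mul_le_mul hx hy (house_nonneg y) ((house_nonneg x).trans hx)

lemma one_le_norm_mul_house_pow (σ : K →+* ℂ) {x : K} (hx : IsIntegral ℤ x) (hx0 : x ≠ 0) :
    1 ≤ ‖σ x‖ * house x ^ (Module.finrank ℚ K - 1) := by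
  refine le_trans ?_ (norm_norm_le_norm_mul_house_pow x σ)
  obtain ⟨z, hz⟩ := IsIntegrallyClosed.isIntegral_iff.1 (Algebra.isIntegral_norm ℚ hx)
  have hz0 : z ≠ 0 := by
    rintro rfl
    rw [map_zero] at hz
    exact Algebra.norm_ne_zero_iff.2 hx0 hz.symm
  rw [← hz, eq_intCast, Int.norm_cast_rat, Int.norm_eq_abs]
  exact_mod_cast Int.one_le_abs hz0

/-- `C` is an admissible constant in Siegel's lemma over `K` for systems with twice as many
unknowns as equations. -/
def IsSiegelConst (K : Type*) [Field K] [NumberField K] (C : ℝ) : Prop :=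
  ∀ ⦃α β : Type⦄ [Fintype α] [Fintype β] ⦃a : Matrix α β (𝓞 K)⦄ ⦃A : ℝ⦄,
    a ≠ 0 → Fintype.card β = 2 * Fintype.card α → (∀ k l, house (a k l : K) ≤ A) →
    ∃ ξ : β → 𝓞 K, ξ ≠ 0 ∧ a.mulVec ξ = 0 ∧
      ∀ l, house (ξ l : K) ≤ C * (Fintype.card β * A)

lemma exists_isSiegelConst (K : Type*) [Field K] [NumberField K] :
    ∃ C : ℝ, 0 ≤ C ∧ IsSiegelConst K C := by
  classical
  obtain ⟨c, hc⟩ : ∃ c : ℝ, ∀ (α β : Type) [Fintype α] [Fintype β] (a : Matrix α β (𝓞 K)) (A : ℝ),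
      a ≠ 0 → 0 < Fintype.card α → Fintype.card α < Fintype.card β →
      (∀ k l, house (algebraMap (𝓞 K) K (a k l)) ≤ A) →
      ∃ ξ : β → 𝓞 K, ξ ≠ 0 ∧ a.mulVec ξ = 0 ∧ ∀ l, house (ξ l : K) ≤
        c * (c * (Fintype.card β : ℕ) * A) ^
          (((Fintype.card α : ℕ) : ℝ) / ((Fintype.card β : ℕ) - (Fintype.card α : ℕ))) :=
    ⟨_, fun α β _ _ a A ha h0 hlt hA =>
      house.exists_ne_zero_int_vec_house_le K a ha h0 hlt rfl hA rfl⟩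
  refine ⟨c * c, mul_self_nonneg c, fun α β _ _ a A ha hcard hA => ?_⟩
  obtain ⟨k, -⟩ := Function.ne_iff.1 ha
  have hα : 0 < Fintype.card α := Fintype.card_pos_iff.2 ⟨k⟩
  obtain ⟨ξ, hξ0, hξ, hbound⟩ := hc α β a A ha hα (by omega) hA
  refine ⟨ξ, hξ0, hξ, fun l => (hbound l).trans_eq ?_⟩
  have hα' : (Fintype.card α : ℝ) ≠ 0 := Nat.cast_ne_zero.2 hα.ne'
  rw [show (Fintype.card α : ℝ) / ((Fintype.card β : ℕ) - (Fintype.card α : ℕ)) = 1 by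
    rw [hcard]; push_cast; field_simp; ring, Real.rpow_one]
  ring

end Arithmetic

section LatticePoints

/-- The points `a + cβ` with `0 ≤ a, c < n`. -/
noncomputable def latticePoints (β : ℝ) (n : ℕ) : Finset ℝ :=
  (Finset.range n ×ˢ Finset.range n).image fun k : ℕ × ℕ => k.1 + k.2 * β

variable {β : ℝ} {n : ℕ}

lemma mem_latticePoints {t : ℝ} :
    t ∈ latticePoints β n ↔ ∃ a < n, ∃ c < n, (a + c * β : ℝ) = t := by
  simp [latticePoints, and_assoc]

lemma card_latticePoints (hβ : Irrational β) : (latticePoints β n).card = n ^ 2 := by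
  rw [latticePoints, Finset.card_image_of_injective, Finset.card_product, Finset.card_range, sq]
  rintro ⟨a, c⟩ ⟨a', c'⟩ (h : (a + c * β : ℝ) = a' + c' * β)
  have hc : c = c' := by
    by_contra hne
    have hne' : (c : ℝ) - c' ≠ 0 := sub_ne_zero.2 (Nat.cast_injective.ne hne)
    refine hβ ⟨((a' : ℚ) - a) / (c - c'), ?_⟩
    push_cast
    rw [div_eq_iff hne']
    linarith
  subst hc
  simpa using h

lemma abs_le_of_mem_latticePoints {t : ℝ} (ht : t ∈ latticePoints β n) :
    |t| ≤ n * (1 + |β|) := by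
  obtain ⟨a, ha, c, hc, rfl⟩ := mem_latticePoints.1 ht
  calc |(a + c * β : ℝ)| ≤ |(a : ℝ)| + |c * β| := abs_add_le _ _
    _ = a + c * |β| := by rw [abs_mul, Nat.abs_cast, Nat.abs_cast]
    _ ≤ n + n * |β| := by gcongr
    _ = n * (1 + |β|) := by ring

lemma exp_natCast_mul_log_mul {u v : ℝ} (hu : 0 < u) (hv : 0 < v)
    (h : β * Real.log u = Real.log v) (j a c : ℕ) :
    Real.exp (j * Real.log u * (a + c * β)) = u ^ (j * a) * v ^ (j * c) := by
  rw [show j * Real.log u * (a + c * β) =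
      (j * a : ℕ) * Real.log u + (j * c : ℕ) * Real.log v by rw [← h]; push_cast; ring,
    Real.exp_add, Real.exp_nat_mul, Real.exp_nat_mul, Real.exp_log hu, Real.exp_log hv]

end LatticePoints

section GelfondSchneider

open NumberField

/-- The monomial `zⁱ xʲᶻ` at the point `z = a + cb`, where `xᵇ = y`, multiplied by the power of
the common denominator `D` that makes it integral for `i < m³`, `j < 2m` and `a, c < 2m²`. -/
def auxEntry {K : Type*} [Field K] (D : ℕ) (b x y : K) (m a c i j : ℕ) : K :=
  (D : K) ^ (9 * m ^ 3) * ((a + c * b) ^ i * (x ^ (j * a) * y ^ (j * c)))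

/-- The value at `a + cb` of the auxiliary function `∑ ξᵢⱼ zⁱ xʲᶻ`, scaled as in `auxEntry`. -/
def auxValue {K : Type*} [Field K] (D : ℕ) (b x y : K) (m : ℕ)
    (ξ : Fin (m ^ 3) × Fin (2 * m) → K) (a c : ℕ) : K :=
  ∑ k, auxEntry D b x y m a c k.1 k.2 * ξ k

variable {K : Type*} [Field K] [NumberField K]

/-- The choices made in the Gelfond–Schneider argument for `xᵇ = y` in a number field embedded in
`ℝ` by `σ`, where `C` is the constant of Siegel's lemma: a common denominator `D`, a parameter `m`
governing the shape of the auxiliary function, and a number `Y` that dominates all sizes entering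
the estimates, yet is so small that `Y ^ (31 + 38 ([K : ℚ] - 1)) < 2 ^ m`. -/
structure GelfondBound (σ : K →+* ℝ) (b x y : K) (C : ℝ) (D m : ℕ) (Y : ℝ) : Prop where
  denom_ne_zero : D ≠ 0
  isIntegral_exponent : IsIntegral ℤ (D * b)
  isIntegral_base : IsIntegral ℤ (D * x)
  isIntegral_power : IsIntegral ℤ (D * y)
  pos : 0 < m
  denom_le : D ≤ Y
  house_base_le : house x ≤ Y
  house_power_le : house y ≤ Y
  house_point_le : 2 * (1 + house b) * m ^ 2 ≤ Y
  card_le : 2 * m ^ 4 ≤ Y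
  siegel_le : 2 * C * m ^ 4 ≤ Y
  radius_le : 10 * (1 + |σ b|) * m ^ 2 ≤ Y
  exp_le : Real.exp (20 * (1 + |σ b|) * |Real.log (σ x)|) ≤ Y
  pow_lt : Y ^ (31 + 38 * (Module.finrank ℚ K - 1)) < 2 ^ m

lemma exists_mul_pow_pow_lt_two_pow {Γ : ℝ} (k n : ℕ) :
    ∃ m : ℕ, 0 < m ∧ (Γ * m ^ k) ^ n < 2 ^ m := by
  have hlim := (tendsto_pow_const_div_const_pow_of_one_lt (k * n)
    (one_lt_two : (1 : ℝ) < 2)).const_mul (Γ ^ n)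
  rw [mul_zero] at hlim
  obtain ⟨m, hlt, hm⟩ := ((hlim.eventually_lt_const zero_lt_one).and (eventually_gt_atTop 0)).exists
  refine ⟨m, hm, ?_⟩
  rw [← mul_div_assoc, div_lt_one (by positivity)] at hlt
  rwa [mul_pow, ← pow_mul]

lemma exists_gelfondBound (σ : K →+* ℝ) (b x y : K) {C : ℝ} (hC : 0 ≤ C) :
    ∃ D m Y, GelfondBound σ b x y C D m Y := by
  classical
  obtain ⟨D, hD, hint⟩ := exists_natCast_mul_isIntegral {b, x, y}
  have hb := house_nonneg b
  have hx := house_nonneg x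
  have hy := house_nonneg y
  have hD0 : (0 : ℝ) ≤ D := D.cast_nonneg
  have hσ := abs_nonneg (σ b)
  have hexp := Real.exp_pos (20 * (1 + |σ b|) * |Real.log (σ x)|)
  set e := Real.exp (20 * (1 + |σ b|) * |Real.log (σ x)|)
  set Γ : ℝ := D + house x + house y + 2 * (1 + house b) + 2 + 2 * C + 10 * (1 + |σ b|) + e
  obtain ⟨m, hm, hlt⟩ := exists_mul_pow_pow_lt_two_pow (Γ := Γ) 4
    (31 + 38 * (Module.finrank ℚ K - 1))
  have hm1 : (1 : ℝ) ≤ m := Nat.one_le_cast.2 hm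
  have hle {t : ℝ} {k : ℕ} (hk : k ≤ 4) (ht : t ≤ Γ) : t * m ^ k ≤ Γ * m ^ 4 := by gcongr
  have hle' {t : ℝ} (ht : t ≤ Γ) : t ≤ Γ * m ^ 4 := by simpa using hle (Nat.zero_le 4) ht
  exact ⟨D, m, Γ * m ^ 4, hD, hint b (by simp), hint x (by simp), hint y (by simp), hm,
    hle' (by linarith), hle' (by linarith), hle' (by linarith), hle (by norm_num) (by linarith),
    hle le_rfl (by linarith), hle le_rfl (by linarith), hle (by norm_num) (by linarith),
    hle' (by linarith), hlt⟩

variable {σ : K →+* ℝ} {b x y : K} {C : ℝ} {D m : ℕ} {Y : ℝ}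

namespace GelfondBound

variable (h : GelfondBound σ b x y C D m Y)
include h

lemma one_le : 1 ≤ Y := by
  have hm : (1 : ℝ) ≤ m ^ 4 := one_le_pow₀ (Nat.one_le_cast.2 h.pos)
  linarith [h.card_le]

lemma mul_pow_le {t : ℝ} (ht : t ≤ Y) {n k : ℕ} (hk : n < k) : t * Y ^ n ≤ Y ^ k := by
  have hY := h.one_le
  calc t * Y ^ n ≤ Y * Y ^ n := by gcongr
    _ = Y ^ (n + 1) := (pow_succ' Y n).symm
    _ ≤ Y ^ k := pow_le_pow_right₀ hY hk

lemma pow_three_pos : 0 < m ^ 3 := pow_pos h.pos 3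

section Entry

variable {a c i j : ℕ} (ha : a < 2 * m ^ 2) (hc : c < 2 * m ^ 2) (hi : i < m ^ 3) (hj : j < 2 * m)
include ha hc hi hj

lemma isIntegral_auxEntry : IsIntegral ℤ (auxEntry D b x y m a c i j) := by
  have hpoint : IsIntegral ℤ ((D : K) * (a + c * b)) := by
    rw [show (D : K) * (a + c * b) = D * a + c * (D * b) by ring]
    exact ((isIntegral_natCast D).mul (isIntegral_natCast a)).add
      ((isIntegral_natCast c).mul h.isIntegral_exponent)
  have hja : j * a ≤ 4 * m ^ 3 := (Nat.mul_le_mul hj.le ha.le).trans_eq (by ring)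
  have hjc : j * c ≤ 4 * m ^ 3 := (Nat.mul_le_mul hj.le hc.le).trans_eq (by ring)
  have hentry : auxEntry D b x y m a c i j = (D : K) ^ m ^ 3 * (a + c * b) ^ i *
      ((D : K) ^ (4 * m ^ 3) * x ^ (j * a) * ((D : K) ^ (4 * m ^ 3) * y ^ (j * c))) := by
    unfold auxEntry
    ring
  rw [hentry]
  exact (isIntegral_pow_mul_pow hpoint hi.le).mul
    ((isIntegral_pow_mul_pow h.isIntegral_base hja).mul
      (isIntegral_pow_mul_pow h.isIntegral_power hjc))

lemma house_auxEntry_le : house (auxEntry D b x y m a c i j) ≤ Y ^ (18 * m ^ 3) := by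
  have hnat (n : ℕ) : house (n : K) = n := by simpa using house_intCast (K := K) n
  have hpoint : house (a + c * b) ≤ Y := by
    refine (house_add_le _ _).trans (le_trans ?_ h.house_point_le)
    have ha' : (a : ℝ) ≤ 2 * m ^ 2 := by exact_mod_cast ha.le
    have hc' : (c : ℝ) ≤ 2 * m ^ 2 := by exact_mod_cast hc.le
    rw [house_nat_mul, hnat]
    calc a + c * house b ≤ 2 * m ^ 2 + 2 * m ^ 2 * house b := by
          gcongr
          exact house_nonneg b
      _ = 2 * (1 + house b) * m ^ 2 := by ring
  have hY := h.one_le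
  have hja : j * a ≤ 4 * m ^ 3 := (Nat.mul_le_mul hj.le ha.le).trans_eq (by ring)
  have hjc : j * c ≤ 4 * m ^ 3 := (Nat.mul_le_mul hj.le hc.le).trans_eq (by ring)
  refine (house_mul_le_mul (house_pow_le_pow ((hnat D).trans_le h.denom_le) hY le_rfl)
    (house_mul_le_mul (house_pow_le_pow hpoint hY hi.le)
      (house_mul_le_mul (house_pow_le_pow h.house_base_le hY hja)
        (house_pow_le_pow h.house_power_le hY hjc)))).trans_eq ?_
  ring

end Entry

lemma exists_forall_auxValue_eq_zero (hC : IsSiegelConst K C) :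
    ∃ ξ : Fin (m ^ 3) × Fin (2 * m) → K, ξ ≠ 0 ∧ (∀ k, IsIntegral ℤ (ξ k)) ∧
      (∀ k, house (ξ k) ≤ Y ^ (19 * m ^ 3)) ∧
      ∀ a < m ^ 2, ∀ c < m ^ 2, auxValue D b x y m ξ a c = 0 := by
  have hlt (k : Fin (m ^ 2)) : (k : ℕ) < 2 * m ^ 2 := k.2.trans_le (by lia)
  let M : Matrix (Fin (m ^ 2) × Fin (m ^ 2)) (Fin (m ^ 3) × Fin (2 * m)) (𝓞 K) := fun k w =>
    ⟨auxEntry D b x y m k.1 k.2 w.1 w.2, h.isIntegral_auxEntry (hlt k.1) (hlt k.2) w.1.2 w.2.2⟩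
  have hm := h.pos
  have hM : M ≠ 0 := fun hM0 => by
    have hentry := congrArg (fun z : 𝓞 K => (z : K)) (congrFun (congrFun hM0
      (⟨0, pow_pos hm 2⟩, ⟨0, pow_pos hm 2⟩)) (⟨0, pow_pos hm 3⟩, ⟨0, by lia⟩))
    simp [M, auxEntry, h.denom_ne_zero] at hentry
  obtain ⟨ξ, hξ0, hMξ, hξ⟩ := hC hM
    (by simp only [Fintype.card_prod, Fintype.card_fin]; ring)
    fun k w => h.house_auxEntry_le (hlt k.1) (hlt k.2) w.1.2 w.2.2
  refine ⟨fun k => ξ k, fun h0 => hξ0 (funext fun k => ?_), fun k => (ξ k).2, fun k => ?_,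
    fun a ha c hc => ?_⟩
  · exact RingOfIntegers.ext (congrFun h0 k)
  · refine (hξ k).trans (le_trans (le_of_eq ?_) (h.mul_pow_le h.siegel_le
      (by linarith [h.pow_three_pos] : 18 * m ^ 3 < 19 * m ^ 3)))
    simp only [Fintype.card_prod, Fintype.card_fin]
    push_cast
    ring
  · have hrow := congrArg (fun z : 𝓞 K => (z : K)) (congrFun hMξ (⟨a, ha⟩, ⟨c, hc⟩))
    simp only [Matrix.mulVec, dotProduct, map_sum, map_mul, Pi.zero_apply, map_zero] at hrow
    exact hrow

section Extrapolation

variable {ξ : Fin (m ^ 3) × Fin (2 * m) → K} (hξ : ∀ k, house (ξ k) ≤ Y ^ (19 * m ^ 3))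
include hξ

lemma house_auxValue_le {a c : ℕ} (ha : a < 2 * m ^ 2) (hc : c < 2 * m ^ 2) :
    house (auxValue D b x y m ξ a c) ≤ Y ^ (38 * m ^ 3) :=
  calc house (auxValue D b x y m ξ a c)
      ≤ ∑ k, house (auxEntry D b x y m a c k.1 k.2 * ξ k) := house_sum_le_sum_house _ _
    _ ≤ ∑ _k : Fin (m ^ 3) × Fin (2 * m), Y ^ (18 * m ^ 3) * Y ^ (19 * m ^ 3) :=
      Finset.sum_le_sum fun k _ =>
        house_mul_le_mul (h.house_auxEntry_le ha hc k.1.2 k.2.2) (hξ k)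
    _ = 2 * m ^ 4 * Y ^ (37 * m ^ 3) := by
      simp only [Finset.sum_const, Finset.card_univ, Fintype.card_prod, Fintype.card_fin,
        nsmul_eq_mul]
      push_cast
      ring
    _ ≤ Y ^ (38 * m ^ 3) := h.mul_pow_le h.card_le (by linarith [h.pow_three_pos])

lemma norm_expPoly_le {z : ℂ} (hz : ‖z‖ = 10 * (1 + |σ b|) * m ^ 2) :
    ‖expPoly (Real.log (σ x)) (fun k => σ (ξ k)) z‖ ≤ Y ^ (22 * m ^ 3) := by
  have hY := h.one_le
  set l := Real.log (σ x)
  have hcoeff (k) : ‖(σ (ξ k) : ℂ)‖ ≤ Y ^ (19 * m ^ 3) :=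
    (norm_embedding_le_house (ξ k) (Complex.ofRealHom.comp σ)).trans (hξ k)
  have hpow (i : Fin (m ^ 3)) : ‖z ^ (i : ℕ)‖ ≤ Y ^ (m ^ 3) := by
    rw [norm_pow]
    exact (pow_le_pow_left₀ (norm_nonneg z) (hz.trans_le h.radius_le) _).trans
      (pow_le_pow_right₀ hY i.2.le)
  have hexp (j : Fin (2 * m)) : ‖Complex.exp ((j : ℕ) * l * z)‖ ≤ Y ^ (m ^ 3) := by
    have hj : ((j : ℕ) : ℝ) ≤ 2 * m := by exact_mod_cast j.2.le
    calc ‖Complex.exp ((j : ℕ) * l * z)‖ ≤ Real.exp ((j : ℕ) * |l| * ‖z‖) := by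
          simpa [norm_mul] using Complex.norm_exp_le_exp_norm ((j : ℕ) * l * z)
      _ ≤ Real.exp (2 * m * |l| * (10 * (1 + |σ b|) * m ^ 2)) := by rw [hz]; gcongr
      _ = Real.exp (20 * (1 + |σ b|) * |l|) ^ (m ^ 3) := by
          rw [← Real.exp_nat_mul]
          push_cast
          ring_nf
      _ ≤ Y ^ (m ^ 3) := pow_le_pow_left₀ (Real.exp_pos _).le h.exp_le _
  calc ‖expPoly l (fun k => σ (ξ k)) z‖
      ≤ ∑ _k : Fin (m ^ 3) × Fin (2 * m), Y ^ (19 * m ^ 3) * Y ^ (m ^ 3) * Y ^ (m ^ 3) :=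
        norm_sum_le_of_le _ fun k _ => by
          rw [norm_mul, norm_mul]
          gcongr
          exacts [hcoeff k, hpow k.1, hexp k.2]
    _ = 2 * m ^ 4 * Y ^ (21 * m ^ 3) := by
        simp only [Finset.sum_const, Finset.card_univ, Fintype.card_prod, Fintype.card_fin,
          nsmul_eq_mul]
        push_cast
        ring
    _ ≤ Y ^ (22 * m ^ 3) := h.mul_pow_le h.card_le (by linarith [h.pow_three_pos])

lemma norm_expPoly_mul_two_pow_le (hb : Irrational (σ b))
    (hzero : ∀ t ∈ latticePoints (σ b) (m ^ 2),
      expPoly (Real.log (σ x)) (fun k => σ (ξ k)) t = 0)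
    {t : ℝ} (ht : t ∈ latticePoints (σ b) (2 * m ^ 2)) :
    ‖expPoly (Real.log (σ x)) (fun k => σ (ξ k)) t‖ * 2 ^ (m ^ 4) ≤ Y ^ (22 * m ^ 3) := by
  have hm := h.pos
  have hnorm {n : ℕ} (hn : n ≤ 2 * m ^ 2) {s : ℝ} (hs : s ∈ latticePoints (σ b) n) :
      ‖(s : ℂ)‖ ≤ 2 * m ^ 2 * (1 + |σ b|) := by
    rw [Complex.norm_real, Real.norm_eq_abs]
    refine (abs_le_of_mem_latticePoints hs).trans ?_
    gcongr
    exact_mod_cast hn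
  have hcard : ((latticePoints (σ b) (m ^ 2)).image Complex.ofReal).card = m ^ 4 := by
    rw [Finset.card_image_of_injective _ Complex.ofReal_injective, card_latticePoints hb]
    ring
  rw [← hcard]
  exact norm_mul_two_pow_card_le differentiable_expPoly (Finset.forall_mem_image.2 hzero)
    (by positivity) (Finset.forall_mem_image.2 fun s hs => hnorm (by lia) hs)
    (fun z hz => h.norm_expPoly_le hξ (hz.trans (by ring))) (hnorm le_rfl ht)

end Extrapolation

end GelfondBound

lemma two_pow_le_of_one_le_mul_pow {t s : ℝ} {A B k n : ℕ} (hY : 0 ≤ Y) (hk : k ≠ 0)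
    (ht : t * 2 ^ (m * k) ≤ Y ^ (A * k)) (hs0 : 0 ≤ s) (hs : s ≤ Y ^ (B * k))
    (hts : 1 ≤ t * s ^ n) : 2 ^ m ≤ Y ^ (A + B * n) := by
  refine (pow_le_pow_iff_left₀ (by positivity) (by positivity) hk).1 ?_
  calc ((2 : ℝ) ^ m) ^ k = 2 ^ (m * k) := (pow_mul _ _ _).symm
    _ ≤ 2 ^ (m * k) * (t * s ^ n) := le_mul_of_one_le_right (by positivity) hts
    _ = t * 2 ^ (m * k) * s ^ n := by ring
    _ ≤ Y ^ (A * k) * (Y ^ (B * k)) ^ n := by gcongr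
    _ = (Y ^ (A + B * n)) ^ k := by ring

lemma ofReal_map_auxValue (hx : 0 < σ x) (hy : 0 < σ y)
    (hxy : σ b * Real.log (σ x) = Real.log (σ y)) (ξ : Fin (m ^ 3) × Fin (2 * m) → K)
    (a c : ℕ) :
    (σ (auxValue D b x y m ξ a c) : ℂ) =
      D ^ (9 * m ^ 3) *
        expPoly (Real.log (σ x)) (fun k => σ (ξ k)) ((a + c * σ b : ℝ) : ℂ) := by
  simp only [auxValue, auxEntry, expPoly, map_sum, map_mul, map_pow, map_add, map_natCast,
    Complex.ofReal_sum, Finset.mul_sum]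
  refine Finset.sum_congr rfl fun k _ => ?_
  have hexp := congrArg Complex.ofReal (exp_natCast_mul_log_mul hx hy hxy k.2 a c)
  push_cast at hexp ⊢
  rw [hexp]
  ring

lemma auxValue_eq_zero_iff (hD : D ≠ 0) (hx : 0 < σ x) (hy : 0 < σ y)
    (hxy : σ b * Real.log (σ x) = Real.log (σ y)) {ξ : Fin (m ^ 3) × Fin (2 * m) → K}
    {a c : ℕ} : auxValue D b x y m ξ a c = 0 ↔
      expPoly (Real.log (σ x)) (fun k => σ (ξ k)) ((a + c * σ b : ℝ) : ℂ) = 0 := by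
  have hD' : (D : ℂ) ^ (9 * m ^ 3) ≠ 0 := pow_ne_zero _ (Nat.cast_ne_zero.2 hD)
  rw [← map_eq_zero σ, ← Complex.ofReal_eq_zero, ofReal_map_auxValue hx hy hxy,
    mul_eq_zero_iff_left hD']

namespace GelfondBound

variable (h : GelfondBound σ b x y C D m Y)
include h

lemma expPoly_eq_zero_of_mem_latticePoints (hb : Irrational (σ b)) (hx : 0 < σ x) (hy : 0 < σ y)
    (hxy : σ b * Real.log (σ x) = Real.log (σ y)) {ξ : Fin (m ^ 3) × Fin (2 * m) → K}
    (hint : ∀ k, IsIntegral ℤ (ξ k)) (hξ : ∀ k, house (ξ k) ≤ Y ^ (19 * m ^ 3))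
    (hzero : ∀ t ∈ latticePoints (σ b) (m ^ 2),
      expPoly (Real.log (σ x)) (fun k => σ (ξ k)) t = 0)
    {t : ℝ} (ht : t ∈ latticePoints (σ b) (2 * m ^ 2)) :
    expPoly (Real.log (σ x)) (fun k => σ (ξ k)) t = 0 := by
  have hsmall := h.norm_expPoly_mul_two_pow_le hξ hb hzero ht
  obtain ⟨a, ha, c, hc, rfl⟩ := mem_latticePoints.1 ht
  set η := auxValue D b x y m ξ a c with hη
  have hη_int : IsIntegral ℤ η :=
    IsIntegral.sum _ fun k _ => (h.isIntegral_auxEntry ha hc k.1.2 k.2.2).mul (hint k)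
  have hη_norm : ‖(σ η : ℂ)‖ * 2 ^ (m * m ^ 3) ≤ Y ^ (31 * m ^ 3) := by
    rw [hη, ofReal_map_auxValue hx hy hxy, norm_mul, norm_pow, Complex.norm_natCast, mul_assoc,
      ← pow_succ', show 31 * m ^ 3 = 9 * m ^ 3 + 22 * m ^ 3 by ring, pow_add Y]
    have hY : 0 ≤ Y := zero_le_one.trans h.one_le
    have hDY := h.denom_le
    gcongr
  by_contra hne
  have hη0 : η ≠ 0 := (auxValue_eq_zero_iff h.denom_ne_zero hx hy hxy).not.2 hne
  refine h.pow_lt.not_ge (two_pow_le_of_one_le_mul_pow (zero_le_one.trans h.one_le)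
    h.pow_three_pos.ne' hη_norm (house_nonneg η) (h.house_auxValue_le hξ ha hc) ?_)
  exact one_le_norm_mul_house_pow (Complex.ofRealHom.comp σ) hη_int hη0

end GelfondBound

theorem eq_one_of_irrational_mul_log_eq_log (hb : Irrational (σ b)) (hx : 0 < σ x) (hy : 0 < σ y)
    (hxy : σ b * Real.log (σ x) = Real.log (σ y)) : x = 1 := by
  by_contra hx1
  have hlog : Real.log (σ x) ≠ 0 :=
    Real.log_ne_zero_of_pos_of_ne_one hx ((map_ne_one_iff σ σ.injective).2 hx1)
  obtain ⟨C, hC0, hC⟩ := exists_isSiegelConst K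
  obtain ⟨D, m, Y, h⟩ := exists_gelfondBound σ b x y hC0
  obtain ⟨ξ, hξ0, hint, hξ, haux⟩ := h.exists_forall_auxValue_eq_zero hC
  have hzero (t) (ht : t ∈ latticePoints (σ b) (m ^ 2)) :
      expPoly (Real.log (σ x)) (fun k => σ (ξ k)) t = 0 := by
    obtain ⟨a, ha, c, hc, rfl⟩ := mem_latticePoints.1 ht
    exact (auxValue_eq_zero_iff h.denom_ne_zero hx hy hxy).1 (haux a ha c hc)
  have hcard : 2 * m * m ^ 3 ≤ (latticePoints (σ b) (2 * m ^ 2)).card := by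
    rw [card_latticePoints hb]
    nlinarith [Nat.zero_le (m ^ 4)]
  have hσξ := eq_zero_of_forall_expPoly_eq_zero hlog hcard fun t ht =>
    h.expPoly_eq_zero_of_mem_latticePoints hb hx hy hxy hint hξ hzero ht
  exact hξ0 (funext fun k => (map_eq_zero σ).1 (congrFun hσξ k))

theorem transcendental_rpow {α β : ℝ} (hα0 : 0 < α) (hα1 : α ≠ 1) (hα : IsAlgebraic ℚ α)
    (hβ : Irrational β) (hβalg : IsAlgebraic ℚ β) : Transcendental ℚ (α ^ β) := by
  intro hγ
  let F := IntermediateField.adjoin ℚ {α, β, α ^ β}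
  have : FiniteDimensional ℚ F := IntermediateField.finiteDimensional_adjoin fun z hz => by
    obtain rfl | rfl | rfl := hz
    exacts [hα.isIntegral, hβalg.isIntegral, hγ.isIntegral]
  have : NumberField F := ⟨⟩
  have hmem {z : ℝ} (hz : z ∈ ({α, β, α ^ β} : Set ℝ)) : z ∈ F :=
    IntermediateField.subset_adjoin ℚ _ hz
  have hone := eq_one_of_irrational_mul_log_eq_log (σ := F.val.toRingHom)
    (b := ⟨β, hmem (by simp)⟩) (x := ⟨α, hmem (by simp)⟩) (y := ⟨α ^ β, hmem (by simp)⟩)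
    hβ hα0 (Real.rpow_pos_of_pos hα0 β) (Real.log_rpow hα0 β).symm
  exact hα1 (congrArg Subtype.val hone)

end GelfondSchneider

section SelfApproximation

lemma isOpen_strip : IsOpen strip :=
  (isOpen_lt continuous_const continuous_re).inter (isOpen_lt continuous_re continuous_const)

lemma exists_rectangle_of_isCompact_subset_strip {K : Set ℂ} (hK : IsCompact K) (hKs : K ⊆ strip) :
    ∃ a b B : ℝ, 1 / 2 < a ∧ b < 1 ∧ ∀ z ∈ K, z.re ∈ Set.Icc a b ∧ |z.im| ≤ B := by
  rcases K.eq_empty_or_nonempty with rfl | hne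
  · exact ⟨1, 0, 0, by norm_num, by norm_num, by simp⟩
  · obtain ⟨x, hx, hx_min⟩ := hK.exists_isMinOn hne continuous_re.continuousOn
    obtain ⟨y, hy, hy_max⟩ := hK.exists_isMaxOn hne continuous_re.continuousOn
    obtain ⟨w, -, hw_max⟩ := hK.exists_isMaxOn hne continuous_im.abs.continuousOn
    exact ⟨x.re, y.re, |w.im|, (hKs hx).1, (hKs hy).2,
      fun z hz => ⟨⟨hx_min hz, hy_max hz⟩, hw_max hz⟩⟩

lemma exists_finset_cover_closedBall_two_mul_subset {X : Type*} [PseudoMetricSpace X] {K U : Set X}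
    (hK : IsCompact K) (hU : IsOpen U) (hKU : K ⊆ U) :
    ∃ (t : Finset X) (r : ℝ), 0 < r ∧ (∀ c ∈ t, Metric.closedBall c (2 * r) ⊆ U) ∧
      K ⊆ ⋃ c ∈ t, Metric.ball c r := by
  obtain ⟨R, hR, hRU⟩ := hK.exists_cthickening_subset_open hU hKU
  obtain ⟨t, htK, htf, hcover⟩ := hK.finite_cover_balls (half_pos hR)
  lift t to Finset X using htf
  refine ⟨t, R / 2, half_pos hR, fun c hc => ?_, hcover⟩
  rw [mul_div_cancel₀ R two_ne_zero]
  exact (Metric.closedBall_subset_cthickening (htK hc) R).trans hRU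

lemma supNorm_lt_of_circleEnergy_lt {K : Set ℂ} {t : Finset ℂ} {r ε : ℝ} {f : ℂ → ℂ}
    (hf : ∀ c ∈ t, DiffContOnCl ℂ f (Metric.ball c (2 * r)))
    (hK : K ⊆ ⋃ c ∈ t, Metric.ball c r) (hε : 0 < ε)
    (hfε : circleEnergy t r f < (ε / 2) ^ 2 / 2) : supNorm K f < ENNReal.ofReal ε := by
  refine lt_of_le_of_lt (iSup₂_le fun s hs => ?_)
    ((ENNReal.ofReal_lt_ofReal_iff hε).2 (half_lt_self hε))
  obtain ⟨c, hc, hsc⟩ := Set.mem_iUnion₂.1 (hK hs)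
  rw [← enorm_eq_nnnorm, ← ofReal_norm]
  refine ENNReal.ofReal_le_ofReal ((sq_le_sq₀ (norm_nonneg _) (half_pos hε).le).1 ?_)
  linarith [norm_sq_le_two_mul_circleEnergy (hf c hc) hc hsc]

theorem self_approx_zeta_algebraic_irrational_general (d : ℝ)
    (hd : ∀ p q : ℚ, 0 < p → 0 < q → (d - 1) * Real.log p = Real.log q → p = 1)
    (K : Set ℂ) (hK : IsCompact K) (hKD : K ⊆ strip) (ε : ℝ) (hε : 0 < ε) :
    0 < lowerDens {τ : ℝ |
      supNorm K (fun s => riemannZeta (s + (d * τ : ℝ) * I) - riemannZeta (s + τ * I)) <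
        ENNReal.ofReal ε} := by
  have hd0 : d ≠ 0 := by
    rintro rfl
    exact absurd (hd 2 2⁻¹ (by norm_num) (by norm_num) (by push_cast [Real.log_inv]; ring))
      (by norm_num)
  obtain ⟨t, r, hr, htD, hcover⟩ :=
    exists_finset_cover_closedBall_two_mul_subset hK isOpen_strip hKD
  obtain ⟨a, b, B, ha, hb, hrect⟩ := exists_rectangle_of_isCompact_subset_strip
    (t.isCompact_biUnion fun c _ => isCompact_closedBall c (2 * r)) (Set.iUnion₂_subset htD)
  have hball {c z : ℂ} (hc : c ∈ t) (hz : z ∈ Metric.closedBall c (2 * r)) :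
      z.re ∈ Set.Icc a b ∧ |z.im| ≤ B := hrect z (Set.mem_biUnion hc hz)
  have hcirc (c) (hc : c ∈ t) :
      Continuous fun x : ℝ × ℝ => zetaShiftDiff d x.1 (circleMap c (2 * r) x.2) :=
    continuous_zetaShiftDiff_comp d continuous_fst (by fun_prop) fun x =>
      (hball hc (circleMap_mem_closedBall c (by positivity) x.2)).1.2.trans_lt hb
  set e : ℝ := (ε / 2) ^ 2 / 2 with he
  have he0 : 0 < e := by positivity
  obtain ⟨S, hS, hmean, hsmall⟩ := exists_folnerWeight_integral_mul_norm_zetaShiftDiff_sq_le hd hd0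
    ha hb B (by positivity : 0 < e / (4 * (t.card + 1)))
  refine lowerDens_pos_of_integral_mul_le (continuous_folnerWeight (d - 1) S)
    (folnerWeight_nonneg _ S) (Nat.cast_pos.2 hS.card_pos) (folnerWeight_le_card _ S)
    (continuous_circleEnergy hcirc) (fun τ => circleEnergy_nonneg t r _) he0
    (fun τ hτ => supNorm_lt_of_circleEnergy_lt (fun c hc => ?_) hcover hε hτ) hmean ?_
  · exact (differentiableOn_zetaShiftDiff d τ).diffContOnCl_ball fun z hz =>
      (hball hc hz).1.2.trans_lt hb
  · filter_upwards [hsmall, eventually_ge_atTop 0] with T hT hT0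
    refine (integral_mul_circleEnergy_le (C := e / (4 * (t.card + 1)) * T)
      (continuous_folnerWeight _ S) hcirc fun c hc z hz => ?_).trans ?_
    · rw [abs_of_pos (by positivity)] at hz
      obtain ⟨hre, him⟩ := hball hc (Metric.sphere_subset_closedBall hz)
      exact hT z hre him
    · calc (t.card : ℝ) * (e / (4 * (t.card + 1)) * T)
          ≤ (t.card + 1) * (e / (4 * (t.card + 1)) * T) := by gcongr; linarith
        _ = e / 4 * T := by field_simp

end SelfApproximation

theorem self_approx_zeta_algebraic_irrational (d : ℝ) (hd_irr : Irrational d)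
    (hd_alg : IsAlgebraic ℚ d)
    (K : Set ℂ) (hK : IsCompact K) (hKD : K ⊆ strip) (hKc : IsConnected Kᶜ)
    (ε : ℝ) (hε : 0 < ε) :
    0 < lowerDens {τ : ℝ |
      supNorm K (fun s => riemannZeta (s + (d * τ : ℝ) * Complex.I)
        - riemannZeta (s + τ * Complex.I)) < ENNReal.ofReal ε} := by
  refine self_approx_zeta_algebraic_irrational_general d (fun p q hp hq hpq => ?_) K hK hKD ε hε
  by_contra hp1
  have hd1_irr : Irrational (d - 1) := by simpa using hd_irr.sub_natCast 1
  have hpow : (p : ℝ) ^ (d - 1) = q := by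
    rw [Real.rpow_def_of_pos (by exact_mod_cast hp), mul_comm, hpq,
      Real.exp_log (by exact_mod_cast hq)]
  have htrans := transcendental_rpow (by exact_mod_cast hp) (by exact_mod_cast hp1)
    (isAlgebraic_ratCast ℚ p) hd1_irr (hd_alg.sub isAlgebraic_one)
  exact htrans (hpow ▸ isAlgebraic_ratCast ℚ q)
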